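/- arXiv:2509.16947 — 2 statements merged into one kernel-verified Lean document; each statement's English description precedes it below -/
import Mathlib

section
/- Let n be a positive integer and, for each nonzero integer m, let K_m = {g ∈ GL_n(ℤ) : g ≡ I_n (mod m)} be the principal congruence subgroup of level m. Let G be a soluble-by-finite subgroup of GL_n(ℤ), i.e., G has a solvable subgroup of finite index. Then every finite-index subgroup H of G contains G ∩ K_m for some nonzero integer m. -/
/-!
The proof works with a group `Γ` acting on a lattice `L` by `ρ : Γ →* Module.End ℤ L`, and shows by
induction on the rank of `L` that every subgroup of finite index containing `ker ρ` contains some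
`levelSubgroup ρ m`, the elements acting as `1 + m f`
(`congruenceProperty_of_solubleByFinite`).

*Reducible case.* If a subgroup of finite index stabilizes a proper nonzero pure submodule `W`, the
full stabilizer of `W` is itself a congruence subgroup (`exists_levelSubgroup_le_of_pure`), so it
may replace `Γ`. The property passes to extensions (`CongruenceProperty.extension`), which reduces
the claim to the actions on `W` and `L / W`, settled by induction, and to the elements acting
trivially on both, which form an abelian unipotent group (`CongruenceProperty.of_unipotent`).

*Strongly irreducible case.* If every subgroup of finite index acts irreducibly over `ℚ`, a solvable
subgroup of finite index, once shrunk so that its centralizer in `End L` cannot grow any more, acts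
by commuting endomorphisms (`commute_of_solvable`, a form of a theorem of Malcev). The double
centralizer of its image is a domain, i.e. an order in a number field, and the elements of `Γ` acting
through it form a congruence subgroup. On that subgroup the claim is a theorem of Chevalley
(`chevalley_units`): in the units of a number field, the `k`-th powers contain all units congruent
to `1` modulo a suitable integer.

*Units.* Units close enough to `1` are `n`-th powers modulo every prime not dividing
`n`. For such a unit `u`, all decomposition groups of `K(ζ_n, u ^ (1 / n))` over `K(ζ_n)` at these
primes are trivial. An extension in which almost all primes split completely is trivial
(`galois_trivial_of_stabilizer`), because the Dedekind zeta functions of both fields have simple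
poles at `1`. Hence `K(ζ_n, u ^ (1 / n)) = K(ζ_n)` is abelian over `K`, and an argument of Schinzel
shows that `u ^ w` is an `n`-th power, where `w` is the number of roots of unity of `K`.
-/

/-- The principal congruence subgroup of level `m` in `GL_n(ℤ)`: matrices congruent to the
identity modulo `m` (every entry of `g - 1` is divisible by `m`). -/
def congruenceSubgroup (n : ℕ) (m : ℤ) : Subgroup (Matrix.GeneralLinearGroup (Fin n) ℤ) where
  carrier := {g | ∀ i j : Fin n, m ∣ ((g : Matrix (Fin n) (Fin n) ℤ) - 1) i j}
  one_mem' := by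
    intro i j
    simp
  mul_mem' := by
    intro a b ha hb i j
    have key : ((a : Matrix (Fin n) (Fin n) ℤ) * b - 1)
        = ((a : Matrix (Fin n) (Fin n) ℤ) - 1) * b + ((b : Matrix (Fin n) (Fin n) ℤ) - 1) := by
      noncomm_ring
    show m ∣ ((↑(a * b) : Matrix (Fin n) (Fin n) ℤ) - 1) i j
    rw [Units.val_mul, key, Matrix.add_apply]
    refine dvd_add ?_ (hb i j)
    rw [Matrix.mul_apply]
    exact Finset.dvd_sum fun k _ => Dvd.dvd.mul_right (ha i k) _
  inv_mem' := by
    intro g hg i j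
    have hmul : (↑g⁻¹ : Matrix (Fin n) (Fin n) ℤ) * (g : Matrix (Fin n) (Fin n) ℤ) = 1 := by
      rw [← Units.val_mul, inv_mul_cancel, Units.val_one]
    have key : ((↑g⁻¹ : Matrix (Fin n) (Fin n) ℤ) - 1)
        = (↑g⁻¹ : Matrix (Fin n) (Fin n) ℤ) * (1 - (g : Matrix (Fin n) (Fin n) ℤ)) := by
      rw [Matrix.mul_sub, mul_one, hmul]
    show m ∣ ((↑g⁻¹ : Matrix (Fin n) (Fin n) ℤ) - 1) i j
    rw [key, Matrix.mul_apply]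
    refine Finset.dvd_sum fun k _ => Dvd.dvd.mul_left ?_ _
    have := hg k j
    rw [Matrix.sub_apply] at this
    have h' : ((1 : Matrix (Fin n) (Fin n) ℤ) - g) k j
        = -(((g : Matrix (Fin n) (Fin n) ℤ) - 1) k j) := by
      simp [Matrix.sub_apply]
    rw [h']
    exact dvd_neg.mpr (hg k j)

/-! ### Primes of a number field and the pole of the zeta function -/

section UnitsOfNumberFields

open NumberField UniqueFactorizationMonoid Filter Topology
open scoped Pointwise

section Zeta

/-- The term `N(I)^{-s}` of the Dedekind zeta function; the zero ideal contributes `0` when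
`s ≠ 0`. -/
noncomputable def zetaTerm (K : Type*) [Field K] [NumberField K] (s : ℝ) (I : Ideal (𝓞 K)) :
    ENNReal :=
  ENNReal.ofReal ((Ideal.absNorm I : ℝ) ^ (-s))

variable {K : Type*} [Field K] [NumberField K]

lemma zetaTerm_mul (s : ℝ) (I J : Ideal (𝓞 K)) :
    zetaTerm K s (I * J) = zetaTerm K s I * zetaTerm K s J := by
  unfold zetaTerm
  rw [← ENNReal.ofReal_mul (by positivity), map_mul, Nat.cast_mul,
    Real.mul_rpow (by positivity) (by positivity)]

lemma zetaTerm_bot {s : ℝ} (hs : 1 < s) : zetaTerm K s ⊥ = 0 := by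
  unfold zetaTerm
  rw [Ideal.absNorm_bot, Nat.cast_zero, Real.zero_rpow (by linarith)]
  simp

/-- The nonvanishing hypothesis provides the convergence of the series, since a divergent series
has the junk value `0`. -/
lemma tsum_zetaTerm_eq {s : ℝ} (hs : 1 < s) (h : dedekindZeta K s ≠ 0) :
    ∑' I, zetaTerm K s I = ENNReal.ofReal (dedekindZeta K s).re := by
  classical
  let a : ℕ → ℕ := fun n => Nat.card {I : Ideal (𝓞 K) // Ideal.absNorm I = n}
  have hterm : ∀ n : ℕ, LSeries.term (fun n ↦ (a n : ℂ)) s n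
      = (((a n : ℝ) * (n : ℝ) ^ (-s) : ℝ) : ℂ) := by
    intro n
    rw [LSeries.term_def]
    split_ifs with hn
    · subst hn
      rw [Nat.cast_zero, Real.zero_rpow (by linarith)]; simp
    · rw [Real.rpow_neg (by positivity)]
      push_cast
      rw [div_eq_mul_inv, Complex.ofReal_cpow (by positivity)]
      simp
  have hdz : dedekindZeta K s = ∑' n : ℕ, (((a n : ℝ) * (n : ℝ) ^ (-s) : ℝ) : ℂ) := by
    unfold dedekindZeta LSeries
    exact tsum_congr hterm
  have hsum : Summable fun n : ℕ => (a n : ℝ) * (n : ℝ) ^ (-s) := by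
    by_contra hns
    apply h
    rw [hdz, tsum_eq_zero_of_not_summable]
    rwa [Complex.summable_ofReal]
  rw [hdz, ← Complex.ofReal_tsum, Complex.ofReal_re,
    ENNReal.ofReal_tsum_of_nonneg (fun n => by positivity) hsum]
  rw [← (Equiv.sigmaFiberEquiv (fun I : Ideal (𝓞 K) => Ideal.absNorm I)).tsum_eq]
  rw [ENNReal.tsum_sigma' ]
  refine tsum_congr fun n => ?_
  have hfin : Finite {I : Ideal (𝓞 K) // Ideal.absNorm I = n} :=
    Ideal.finite_setOfPred_absNorm_eq n
  have : ∀ b : {I : Ideal (𝓞 K) // Ideal.absNorm I = n},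
      zetaTerm K s ((Equiv.sigmaFiberEquiv (fun I : Ideal (𝓞 K) => Ideal.absNorm I)) ⟨n, b⟩)
        = ENNReal.ofReal ((n : ℝ) ^ (-s)) := by
    intro b
    simp [zetaTerm, b.2]
  rw [tsum_congr this, ENNReal.tsum_const, ENNReal.ofReal_mul (by positivity),
    ENNReal.ofReal_natCast]
  congr 1
  simp [a, ENat.card_eq_coe_natCard]

/-- Two-sided control of the pole of the Dedekind zeta function at `1`. -/
lemma zeta_bounds (K : Type*) [Field K] [NumberField K] :
    ∃ c C : ℝ, 0 < c ∧ 0 < C ∧ ∀ᶠ s : ℝ in 𝓝[>] 1, 1 < s ∧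
      ENNReal.ofReal (c / (s - 1)) ≤ ∑' I, zetaTerm K s I ∧
      ∑' I, zetaTerm K s I ≤ ENNReal.ofReal (C / (s - 1)) := by
  have hr := dedekindZeta_residue_pos K
  set r := dedekindZeta_residue K
  have h1 := tendsto_sub_one_mul_dedekindZeta_nhdsGT K
  have h2 : Tendsto (fun s : ℝ ↦ (s - 1) * (dedekindZeta K s).re) (𝓝[>] 1) (𝓝 r) := by
    have := (Complex.continuous_re.tendsto _).comp h1
    refine this.congr fun s => ?_
    have : ((s : ℂ) - 1) = ((s - 1 : ℝ) : ℂ) := by push_cast; rfl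
    simp only [Function.comp_apply]
    rw [this, Complex.re_ofReal_mul]
  refine ⟨r / 2, 2 * r, by positivity, by positivity, ?_⟩
  filter_upwards [h2.eventually (lt_mem_nhds (show r / 2 < r by linarith)),
    h2.eventually (gt_mem_nhds (show r < 2 * r by linarith)), self_mem_nhdsWithin] with s ha hb hs
  have hs' : 1 < s := hs
  have hpos : 0 < s - 1 := by linarith
  have hne : dedekindZeta K s ≠ 0 := by
    intro h0
    rw [h0] at ha
    simp at ha
    linarith
  refine ⟨hs', ?_⟩
  rw [tsum_zetaTerm_eq hs' hne]
  constructor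
  · apply ENNReal.ofReal_le_ofReal
    rw [div_le_iff₀ hpos]; linarith
  · apply ENNReal.ofReal_le_ofReal
    rw [le_div_iff₀ hpos]; linarith

/-- Nonzero ideals divisible by none of the ideals in `T`. -/
def goodIdeals (T : Finset (Ideal (𝓞 K))) : Set (Ideal (𝓞 K)) :=
  {I | I ≠ ⊥ ∧ ∀ P ∈ T, ¬ P ∣ I}

lemma zetaTerm_prime_le {s : ℝ} (hs : 1 < s) {P : Ideal (𝓞 K)} (hP : Prime P) :
    zetaTerm K s P ≤ 2⁻¹ := by
  have hP1 : Ideal.absNorm P ≠ 1 := by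
    rw [Ne, Ideal.absNorm_eq_one_iff]
    intro h
    exact hP.not_isUnit (by simpa using h)
  have hP0 : Ideal.absNorm P ≠ 0 := by
    rw [Ne, Ideal.absNorm_eq_zero_iff]; exact hP.ne_zero
  have h2 : (2 : ℝ) ≤ Ideal.absNorm P := by exact_mod_cast (by omega : 2 ≤ Ideal.absNorm P)
  have : (2⁻¹ : ENNReal) = ENNReal.ofReal (2⁻¹ : ℝ) := by
    rw [ENNReal.ofReal_inv_of_pos (by norm_num)]; simp
  rw [this]
  apply ENNReal.ofReal_le_ofReal
  rw [Real.rpow_neg (by positivity)]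
  apply inv_anti₀ (by norm_num)
  calc (2 : ℝ) ≤ Ideal.absNorm P := h2
    _ = (Ideal.absNorm P : ℝ) ^ (1 : ℝ) := (Real.rpow_one _).symm
    _ ≤ _ := Real.rpow_le_rpow_of_exponent_le (by linarith) hs.le

/-- Discarding the ideals divisible by finitely many primes costs at most a constant factor in
the zeta sum: each prime removes at most half of it. -/
lemma tsum_le_goodIdeals {s : ℝ} (hs : 1 < s) (hfin : ∑' I, zetaTerm K s I ≠ ⊤)
    (T : Finset (Ideal (𝓞 K))) (hT : ∀ P ∈ T, Prime P) :
    ∑' I, zetaTerm K s I ≤ 2 ^ T.card * ∑' I : goodIdeals T, zetaTerm K s I := by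
  classical
  induction T using Finset.induction_on with
  | empty =>
    have : goodIdeals (∅ : Finset (Ideal (𝓞 K))) = {⊥}ᶜ := by
      ext I; simp [goodIdeals]
    rw [this, ← ENNReal.summable.tsum_add_tsum_compl (s := {(⊥ : Ideal (𝓞 K))}) ENNReal.summable]
    simp [zetaTerm_bot hs]
  | insert P T hPT ih =>
    have ih := ih fun Q hQ => hT Q (Finset.mem_insert_of_mem hQ)
    have hP : Prime P := hT P (Finset.mem_insert_self _ _)
    set Z := ∑' I : goodIdeals T, zetaTerm K s I
    set Z' := ∑' I : goodIdeals (insert P T), zetaTerm K s I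
    have hZfin : Z ≠ ⊤ := by
      refine ne_top_of_le_ne_top hfin ?_
      exact ENNReal.tsum_comp_le_tsum_of_injective Subtype.val_injective _
    have hsplit : Z ≤ Z' + 2⁻¹ * Z := by
      have hsub : goodIdeals T ⊆
          goodIdeals (insert P T) ∪ (fun J => P * J) '' (goodIdeals T) := by
        intro I hI
        by_cases hPI : P ∣ I
        · right
          obtain ⟨J, rfl⟩ := hPI
          refine ⟨J, ⟨?_, ?_⟩, rfl⟩
          · rintro rfl
            exact hI.1 (by simp)
          · intro Q hQ hQJ
            exact hI.2 Q hQ (hQJ.mul_left P)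
        · left
          refine ⟨hI.1, ?_⟩
          intro Q hQ
          rcases Finset.mem_insert.1 hQ with rfl | hQ
          · exact hPI
          · exact hI.2 Q hQ
      calc Z ≤ ∑' I : (goodIdeals (insert P T) ∪ (fun J => P * J) '' (goodIdeals T) :
              Set (Ideal (𝓞 K))), zetaTerm K s I := ENNReal.tsum_mono_subtype _ hsub
        _ ≤ Z' + ∑' I : ((fun J => P * J) '' (goodIdeals T) : Set (Ideal (𝓞 K))),
              zetaTerm K s I := ENNReal.tsum_union_le _ _ _
        _ ≤ Z' + 2⁻¹ * Z := by
          gcongr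
          rw [tsum_image (fun I => zetaTerm K s I)
            (fun a _ b _ h => mul_left_cancel₀ hP.ne_zero h)]
          simp_rw [zetaTerm_mul]
          rw [ENNReal.tsum_mul_left]
          gcongr
          exact zetaTerm_prime_le hs hP
    have h2 : Z ≤ 2 * Z' := by
      have h3 : Z = 2⁻¹ * Z + 2⁻¹ * Z := by
        rw [← add_mul, ENNReal.inv_two_add_inv_two, one_mul]
      have h4 : 2⁻¹ * Z + 2⁻¹ * Z ≤ Z' + 2⁻¹ * Z := h3 ▸ hsplit
      have h5 : 2⁻¹ * Z ≤ Z' :=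
        (ENNReal.add_le_add_iff_right (ENNReal.mul_ne_top (by simp) hZfin)).1 h4
      calc Z = 2 * (2⁻¹ * Z) := by
            rw [← mul_assoc, ENNReal.mul_inv_cancel (by simp) (by simp), one_mul]
        _ ≤ 2 * Z' := by gcongr
    calc _ ≤ 2 ^ T.card * Z := ih
      _ ≤ 2 ^ T.card * (2 * Z') := by gcongr
      _ = _ := by rw [Finset.card_insert_of_notMem hPT, pow_succ, mul_assoc]

end Zeta

section Split

variable {L M : Type*} [Field L] [NumberField L] [Field M] [NumberField M]

/-- If each prime `Q` of `L` outside a finite set `T` has two distinct primes `P₁ Q`, `P₂ Q` of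
`M` above it with the same norm, then pairs of ideals of `L` prime to `T` embed, norm-compatibly,
into the ideals of `M`. -/
lemma goodIdeals_sq_le (T : Finset (Ideal (𝓞 L))) (P₁ P₂ : Ideal (𝓞 L) → Ideal (𝓞 M))
    (U : Ideal (𝓞 M) → Ideal (𝓞 L))
    (h1 : ∀ Q, Prime Q → Q ∉ T → Prime (P₁ Q) ∧ U (P₁ Q) = Q ∧
      Ideal.absNorm (P₁ Q) = Ideal.absNorm Q)
    (h2 : ∀ Q, Prime Q → Q ∉ T → Prime (P₂ Q) ∧ U (P₂ Q) = Q ∧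
      Ideal.absNorm (P₂ Q) = Ideal.absNorm Q)
    (h12 : ∀ Q, Prime Q → Q ∉ T → P₁ Q ≠ P₂ Q) (s : ℝ) :
    (∑' I : goodIdeals T, zetaTerm L s I) * (∑' I : goodIdeals T, zetaTerm L s I)
      ≤ ∑' J, zetaTerm M s J := by
  classical
  have hgood : ∀ I : goodIdeals T, ∀ Q ∈ normalizedFactors I.1, Prime Q ∧ Q ∉ T := by
    intro I Q hQ
    refine ⟨prime_of_normalized_factor Q hQ, fun hQT => I.2.2 Q hQT ?_⟩
    exact dvd_of_mem_normalizedFactors hQ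
  let Φ : (Ideal (𝓞 L) → Ideal (𝓞 M)) → Ideal (𝓞 L) → Ideal (𝓞 M) :=
    fun P I => ((normalizedFactors I).map P).prod
  have hnorm : ∀ P : Ideal (𝓞 L) → Ideal (𝓞 M),
      (∀ Q, Prime Q → Q ∉ T → Ideal.absNorm (P Q) = Ideal.absNorm Q) →
      ∀ I : goodIdeals T, Ideal.absNorm (Φ P I) = Ideal.absNorm I.1 := by
    intro P hP I
    conv_rhs => rw [← Ideal.prod_normalizedFactors_eq_self I.2.1]
    simp only [Φ]
    rw [map_multiset_prod, map_multiset_prod, Multiset.map_map]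
    congr 1
    refine Multiset.map_congr rfl fun Q hQ => ?_
    exact hP Q (hgood I Q hQ).1 (hgood I Q hQ).2
  have hnf : ∀ a b : goodIdeals T, normalizedFactors (Φ P₁ a * Φ P₂ b)
      = (normalizedFactors a.1).map P₁ + (normalizedFactors b.1).map P₂ := by
    intro a b
    simp only [Φ]
    rw [← Multiset.prod_add]
    apply normalizedFactors_prod_of_prime
    intro p hp
    rcases Multiset.mem_add.1 hp with hp | hp
    · obtain ⟨Q, hQ, rfl⟩ := Multiset.mem_map.1 hp
      exact (h1 Q (hgood a Q hQ).1 (hgood a Q hQ).2).1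
    · obtain ⟨Q, hQ, rfl⟩ := Multiset.mem_map.1 hp
      exact (h2 Q (hgood b Q hQ).1 (hgood b Q hQ).2).1
  -- `f` recovers the pair of ideals from the factors of the product: the factors of the form
  -- `P₁ Q` give the first ideal and the other ones give the second
  let f : Multiset (Ideal (𝓞 M)) → Ideal (𝓞 L) × Ideal (𝓞 L) := fun m =>
    (((m.filter fun R => R = P₁ (U R)).map U).prod, ((m.filter fun R => ¬ R = P₁ (U R)).map U).prod)
  have hf : ∀ a b : goodIdeals T, f (normalizedFactors (Φ P₁ a * Φ P₂ b)) = (a.1, b.1) := by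
    intro a b
    have hA1 : ∀ R ∈ (normalizedFactors a.1).map P₁, R = P₁ (U R) := by
      intro R hR
      obtain ⟨Q, hQ, rfl⟩ := Multiset.mem_map.1 hR
      rw [(h1 Q (hgood a Q hQ).1 (hgood a Q hQ).2).2.1]
    have hB1 : ∀ R ∈ (normalizedFactors b.1).map P₂, ¬ R = P₁ (U R) := by
      intro R hR
      obtain ⟨Q, hQ, rfl⟩ := Multiset.mem_map.1 hR
      rw [(h2 Q (hgood b Q hQ).1 (hgood b Q hQ).2).2.1]
      exact (h12 Q (hgood b Q hQ).1 (hgood b Q hQ).2).symm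
    have hA2 : ((normalizedFactors a.1).map P₁).map U = normalizedFactors a.1 := by
      rw [Multiset.map_map]
      conv_rhs => rw [← Multiset.map_id (normalizedFactors a.1)]
      refine Multiset.map_congr rfl fun Q hQ => ?_
      exact (h1 Q (hgood a Q hQ).1 (hgood a Q hQ).2).2.1
    have hB2 : ((normalizedFactors b.1).map P₂).map U = normalizedFactors b.1 := by
      rw [Multiset.map_map]
      conv_rhs => rw [← Multiset.map_id (normalizedFactors b.1)]
      refine Multiset.map_congr rfl fun Q hQ => ?_
      exact (h2 Q (hgood b Q hQ).1 (hgood b Q hQ).2).2.1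
    simp only [f]
    rw [hnf, Multiset.filter_add, Multiset.filter_add,
      Multiset.filter_eq_self.2 hA1, Multiset.filter_eq_nil.2 hB1,
      Multiset.filter_eq_self.2 hB1,
      Multiset.filter_eq_nil.2 (fun R hR => not_not.2 (hA1 R hR)),
      add_zero, zero_add, hA2, hB2, Ideal.prod_normalizedFactors_eq_self a.2.1,
      Ideal.prod_normalizedFactors_eq_self b.2.1]
  have hinj : Function.Injective
      (fun p : goodIdeals T × goodIdeals T => Φ P₁ p.1 * Φ P₂ p.2) := by
    rintro ⟨a, b⟩ ⟨a', b'⟩ h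
    have h' := congrArg (fun J => f (normalizedFactors J)) h
    simp only [hf] at h'
    ext1
    · exact Subtype.ext (congrArg Prod.fst h')
    · exact Subtype.ext (congrArg Prod.snd h')
  calc _ = ∑' p : goodIdeals T × goodIdeals T, zetaTerm L s p.1 * zetaTerm L s p.2 := by
        rw [ENNReal.tsum_prod (f := fun a b : goodIdeals T => zetaTerm L s a * zetaTerm L s b)]
        simp_rw [ENNReal.tsum_mul_left, ENNReal.tsum_mul_right]
    _ = ∑' p : goodIdeals T × goodIdeals T, zetaTerm M s (Φ P₁ p.1 * Φ P₂ p.2) := by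
        refine tsum_congr fun p => ?_
        rw [zetaTerm_mul]
        simp only [zetaTerm]
        rw [hnorm P₁ (fun Q h h' => (h1 Q h h').2.2), hnorm P₂ (fun Q h h' => (h2 Q h h').2.2)]
    _ ≤ _ := ENNReal.tsum_comp_le_tsum_of_injective hinj _

/-- Almost all primes of `L` cannot have two distinct primes of the same norm above them in `M`:
otherwise `ζ_L ^ 2 = O(ζ_M)` near `1`, while both functions have simple poles there. -/
lemma not_forall_two_primes (T : Finset (Ideal (𝓞 L))) (hT : ∀ P ∈ T, Prime P)
    (P₁ P₂ : Ideal (𝓞 L) → Ideal (𝓞 M)) (U : Ideal (𝓞 M) → Ideal (𝓞 L))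
    (h1 : ∀ Q, Prime Q → Q ∉ T → Prime (P₁ Q) ∧ U (P₁ Q) = Q ∧
      Ideal.absNorm (P₁ Q) = Ideal.absNorm Q)
    (h2 : ∀ Q, Prime Q → Q ∉ T → Prime (P₂ Q) ∧ U (P₂ Q) = Q ∧
      Ideal.absNorm (P₂ Q) = Ideal.absNorm Q)
    (h12 : ∀ Q, Prime Q → Q ∉ T → P₁ Q ≠ P₂ Q) : False := by
  obtain ⟨c, C, hc, hC, hL⟩ := zeta_bounds L
  obtain ⟨c', C', hc', hC', hM⟩ := zeta_bounds M
  set k : ℝ := 2 ^ T.card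
  have hk : 0 < k := by positivity
  -- for `s - 1 < ε` the square of the lower bound for `ζ_L`, divided by `k ^ 2`, exceeds the upper
  -- bound for `ζ_M`
  set ε : ℝ := c * c / (k * k * C')
  have hε : 0 < ε := by positivity
  have hnear : ∀ᶠ s : ℝ in 𝓝[>] 1, s < 1 + ε :=
    nhdsWithin_le_nhds (gt_mem_nhds (by linarith))
  obtain ⟨s, ⟨hs, hlow, hupL⟩, hsM, hsε⟩ := (hL.and (hM.and hnear)).exists
  have hup := hsM.2.2
  have hpos : 0 < s - 1 := by linarith
  have hfin : ∑' I, zetaTerm L s I ≠ ⊤ := ne_top_of_le_ne_top ENNReal.ofReal_ne_top hupL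
  have hg := tsum_le_goodIdeals hs hfin T hT
  have hsq := goodIdeals_sq_le T P₁ P₂ U h1 h2 h12 s
  set Z := ∑' I : goodIdeals T, zetaTerm L s I
  have hk' : (2 : ENNReal) ^ T.card = ENNReal.ofReal k := by
    rw [ENNReal.ofReal_pow (by norm_num)]; simp
  have key : ENNReal.ofReal (c / (s - 1)) * ENNReal.ofReal (c / (s - 1)) ≤
      ENNReal.ofReal k * ENNReal.ofReal k * ENNReal.ofReal (C' / (s - 1)) := by
    calc _ ≤ (ENNReal.ofReal k * Z) * (ENNReal.ofReal k * Z) := by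
          gcongr <;> exact hlow.trans (hk' ▸ hg)
      _ = ENNReal.ofReal k * ENNReal.ofReal k * (Z * Z) := by ring
      _ ≤ _ := by gcongr; exact hsq.trans hup
  rw [← ENNReal.ofReal_mul (by positivity), ← ENNReal.ofReal_mul (by positivity),
    ← ENNReal.ofReal_mul (by positivity), ENNReal.ofReal_le_ofReal_iff (by positivity)] at key
  have h3 : c * c ≤ k * k * C' * (s - 1) := by
    have h4 : c / (s - 1) * (c / (s - 1)) * ((s - 1) * (s - 1)) = c * c := by
      field_simp
    have h5 : k * k * (C' / (s - 1)) * ((s - 1) * (s - 1)) = k * k * C' * (s - 1) := by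
      field_simp
    rw [← h4, ← h5]
    gcongr
  have h6 : k * k * C' * (s - 1) < c * c := by
    have : s - 1 < ε := by linarith
    calc k * k * C' * (s - 1) < k * k * C' * ε := by gcongr
      _ = c * c := by simp only [ε]; field_simp
  linarith

end Split

/-! ### Extensions with trivial decomposition groups -/

section Decomposition

variable {L M : Type*} [Field L] [NumberField L] [Field M] [NumberField M]
  [Algebra L M] [IsGalois L M]

/-- A Galois extension of number fields in which almost all primes have trivial decomposition
group is trivial: otherwise a prime `P Q` above `Q` and its conjugate under `τ ≠ 1` are two distinct
primes, both of the same norm as `Q`. -/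
lemma galois_trivial_of_stabilizer (n : ℕ) (hn : n ≠ 0)
    (h : ∀ R : Ideal (𝓞 M), R.IsPrime → R ≠ ⊥ → (n : 𝓞 M) ∉ R →
      ∀ τ : Gal(M/L), τ • R = R → τ = 1) (τ : Gal(M/L)) : τ = 1 := by
  classical
  by_contra hτ
  have hn0 : Ideal.span {(n : 𝓞 L)} ≠ ⊥ := by
    rw [Ne, Ideal.span_singleton_eq_bot]; exact_mod_cast hn
  let T : Finset (Ideal (𝓞 L)) := (normalizedFactors (Ideal.span {(n : 𝓞 L)})).toFinset
  have hT : ∀ P ∈ T, Prime P := fun P hP =>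
    prime_of_normalized_factor P (Multiset.mem_toFinset.1 hP)
  have hTn : ∀ Q : Ideal (𝓞 L), Prime Q → Q ∉ T → (n : 𝓞 L) ∉ Q := by
    intro Q hQ hQT hnQ
    apply hQT
    refine Multiset.mem_toFinset.2 ?_
    rw [Ideal.mem_normalizedFactors_iff hn0]
    refine ⟨Ideal.isPrime_of_prime hQ, ?_⟩
    rw [Ideal.span_singleton_le_iff_mem]; exact hnQ
  have key : ∀ Q : Ideal (𝓞 L), ∃ R : Ideal (𝓞 M), Prime Q → Q ∉ T →
      R.IsPrime ∧ R ≠ ⊥ ∧ R.under (𝓞 L) = Q := by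
    intro Q
    by_cases hQ : Prime Q
    · have hQp : Q.IsPrime := Ideal.isPrime_of_prime hQ
      have hQm : Q.IsMaximal := hQp.isMaximal hQ.ne_zero
      obtain ⟨R, hR, hRQ⟩ := Ideal.exists_maximal_ideal_liesOver_of_isIntegral (S := 𝓞 M) Q
      refine ⟨R, fun _ _ => ⟨hR.isPrime, ?_, hRQ.over.symm⟩⟩
      exact Ideal.ne_bot_of_liesOver_of_ne_bot hQ.ne_zero R
    · exact ⟨⊥, fun h => absurd h hQ⟩
  choose P hP using key
  have hprime : ∀ R : Ideal (𝓞 M), R.IsPrime → R ≠ ⊥ → (n : 𝓞 M) ∉ R →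
      Ideal.absNorm R = Ideal.absNorm (R.under (𝓞 L)) := by
    intro R hR hR0 hnR
    have hu : (R.under (𝓞 L)).IsPrime := inferInstance
    have hu0 : R.under (𝓞 L) ≠ ⊥ := by
      intro h0
      exact hR0 (Ideal.eq_bot_of_comap_eq_bot h0)
    have hmax : (R.under (𝓞 L)).IsMaximal := hu.isMaximal hu0
    have : R.LiesOver (R.under (𝓞 L)) := ⟨rfl⟩
    have : Finite (𝓞 L ⧸ R.under (𝓞 L)) := Ideal.finiteQuotientOfFreeOfNeBot _ hu0
    have : Finite (R.under (𝓞 L)).ResidueField :=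
      Finite.of_surjective _ (Ideal.bijective_algebraMap_quotient_residueField _).2
    have hst := Ideal.card_stabilizer_eq_card_inertia_mul_finrank (G := Gal(M/L))
      (R.under (𝓞 L)) R
    have htriv : MulAction.stabilizer Gal(M/L) R = ⊥ := by
      rw [eq_bot_iff]
      intro σ hσ
      exact h R hR hR0 hnR σ hσ
    rw [htriv, Subgroup.card_bot] at hst
    have hf := Nat.eq_one_of_mul_eq_one_left hst.symm
    rw [← Ideal.absNorm_pow_inertiaDeg (R.under (𝓞 L)) R, hf, pow_one]
  have hnP : ∀ Q, Prime Q → Q ∉ T → (n : 𝓞 M) ∉ P Q := by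
    intro Q hQ hQT hmem
    apply hTn Q hQ hQT
    rw [← (hP Q hQ hQT).2.2, Ideal.under_def, Ideal.mem_comap]
    simpa using hmem
  refine not_forall_two_primes T hT P (fun Q => τ • P Q) (fun R => R.under (𝓞 L)) ?_ ?_ ?_
  · intro Q hQ hQT
    obtain ⟨a, b, c⟩ := hP Q hQ hQT
    refine ⟨Ideal.prime_of_isPrime b a, c, ?_⟩
    rw [hprime _ a b (hnP Q hQ hQT), c]
  · intro Q hQ hQT
    obtain ⟨a, b, c⟩ := hP Q hQ hQT
    have a' : (τ • P Q).IsPrime := inferInstance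
    have b' : τ • P Q ≠ ⊥ := by
      intro h0
      apply b
      rw [← inv_smul_smul τ (P Q), h0]
      simp
    have c' : (τ • P Q).under (𝓞 L) = Q := by
      exact (Ideal.under_smul (𝓞 L) (P Q) τ).trans c
    have d' : (n : 𝓞 M) ∉ τ • P Q := by
      intro hmem
      apply hnP Q hQ hQT
      rw [← Ideal.smul_mem_pointwise_smul_iff (a := τ)]
      have hτn : τ • (n : 𝓞 M) = n := map_natCast (MulSemiringAction.toRingHom _ (𝓞 M) τ) n
      rwa [hτn]
    refine ⟨Ideal.prime_of_isPrime b' a', c', ?_⟩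
    rw [hprime _ a' b' d', c']
  · intro Q hQ hQT heq
    obtain ⟨a, b, c⟩ := hP Q hQ hQT
    exact hτ (h _ a b (hnP Q hQ hQT) τ heq.symm)

end Decomposition

/-! ### Local powers and Kummer extensions -/

section Kummer

universe uK

open Polynomial in
/-- The Kummer extension `M = K(ζ_n, u ^ (1 / n))`, built as the splitting field of
`(X ^ n - 1) (X ^ n - u)`. -/
lemma exists_kummer_field {K : Type uK} [Field K] [NumberField K] (n : ℕ) (hn : n ≠ 0)
    (u : K) (hu : u ≠ 0) :
    ∃ (M : Type uK) (_ : Field M) (_ : NumberField M) (_ : Algebra K M) (_ : IsGalois K M)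
      (ζ w : M), IsPrimitiveRoot ζ n ∧ w ^ n = algebraMap K M u ∧
      ∀ σ : Gal(M/K), σ ζ = ζ → σ w = w → σ = 1 := by
  classical
  have hn' : 0 < n := Nat.pos_of_ne_zero hn
  let f : K[X] := (X ^ n - 1) * (X ^ n - C u)
  have h1 : (X ^ n - 1 : K[X]) ≠ 0 := (monic_X_pow_sub_C (1 : K) hn).ne_zero
  have h2 : (X ^ n - C u : K[X]) ≠ 0 := (monic_X_pow_sub_C u hn).ne_zero
  have hf : f ≠ 0 := mul_ne_zero h1 h2
  let M := f.SplittingField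
  have : NumberField M := NumberField.of_module_finite K M
  have : IsGalois K M := IsGalois.mk
  have : NeZero n := ⟨hn⟩
  have hs : (f.map (algebraMap K M)).Splits := SplittingField.splits f
  have hfm : f.map (algebraMap K M) ≠ 0 := by
    simpa [Polynomial.map_eq_zero] using hf
  have : NeZero (n : M) := ⟨by exact_mod_cast hn⟩
  obtain ⟨ζ, hζ⟩ : ∃ ζ : M, IsPrimitiveRoot ζ n := by
    have hd : cyclotomic n M ∣ f.map (algebraMap K M) := by
      have : f.map (algebraMap K M) = (X ^ n - 1) * (X ^ n - C (algebraMap K M u)) := by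
        simp [f]
      rw [this]
      exact (cyclotomic.dvd_X_pow_sub_one n M).mul_right _
    obtain ⟨ζ, h⟩ := (hs.of_dvd hfm hd).exists_eval_eq_zero (degree_cyclotomic_pos n M hn').ne'
    exact ⟨ζ, isRoot_cyclotomic_iff.1 h⟩
  obtain ⟨w, hw⟩ : ∃ w : M, w ^ n = algebraMap K M u := by
    have hd : (X ^ n - C (algebraMap K M u)) ∣ f.map (algebraMap K M) := by
      have : f.map (algebraMap K M) = (X ^ n - 1) * (X ^ n - C (algebraMap K M u)) := by
        simp [f]
      rw [this]
      exact Dvd.intro_left _ rfl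
    obtain ⟨w, h⟩ := (hs.of_dvd hfm hd).exists_eval_eq_zero
      (by rw [degree_X_pow_sub_C hn']; exact_mod_cast hn)
    exact ⟨w, by simpa [sub_eq_zero] using h⟩
  have hw0 : w ≠ 0 := by
    rintro rfl
    rw [zero_pow hn] at hw
    exact hu ((map_eq_zero (algebraMap K M)).1 hw.symm)
  refine ⟨M, inferInstance, inferInstance, inferInstance, inferInstance, ζ, w, hζ, hw, ?_⟩
  intro σ hσζ hσw
  have hroots : ∀ x ∈ f.rootSet M, σ x = x := by
    intro x hx
    have hx0 := aeval_eq_zero_of_mem_rootSet hx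
    simp only [f, map_mul, map_sub, map_pow, aeval_X, map_one, aeval_C, mul_eq_zero] at hx0
    rcases hx0 with h | h
    · obtain ⟨i, -, rfl⟩ := hζ.eq_pow_of_pow_eq_one (sub_eq_zero.1 h)
      simp [hσζ]
    · have h' : (x / w) ^ n = 1 := by
        rw [div_pow, hw, sub_eq_zero.1 h, div_self]
        exact (_root_.map_ne_zero _).2 hu
      obtain ⟨i, -, hi⟩ := hζ.eq_pow_of_pow_eq_one h'
      have : x = ζ ^ i * w := by rw [hi, div_mul_cancel₀ x hw0]
      rw [this]; simp [hσζ, hσw]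
  have : (σ : M →ₐ[K] M) = AlgHom.id K M :=
    AlgHom.ext_of_adjoin_eq_top (SplittingField.adjoin_rootSet f) (fun x hx => hroots x hx)
  ext x
  exact DFunLike.congr_fun this x

/-- An automorphism in the decomposition group of a prime `R` not containing `n`, which fixes the
`n`-th roots of unity, fixes the `n`-th root `w` of a unit `u` which is an `n`-th power
modulo `R`. -/
lemma kummer_local {K M : Type*} [Field K] [NumberField K] [Field M] [NumberField M]
    [Algebra K M] (n : ℕ) (hn : n ≠ 0) (u : (𝓞 K)ˣ) (ζ w : M) (hζ : IsPrimitiveRoot ζ n)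
    (hw : w ^ n = algebraMap K M ((u : 𝓞 K) : K))
    (R : Ideal (𝓞 M)) (hR : R.IsPrime) (hnR : (n : 𝓞 M) ∉ R)
    (t : 𝓞 K) (ht : algebraMap (𝓞 K) (𝓞 M) ((u : 𝓞 K) - t ^ n) ∈ R)
    (τ : 𝓞 M →+* 𝓞 M) (τ' : Gal(M/K)) (hττ : ∀ x : 𝓞 M, ((τ x : 𝓞 M) : M) = τ' (x : M))
    (hτζ : τ' ζ = ζ) (hτR : ∀ x ∈ R, τ x ∈ R) : τ' w = w := by
  have hn' : 0 < n := Nat.pos_of_ne_zero hn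
  have : NeZero n := ⟨hn⟩
  have hinj : Function.Injective (fun x : 𝓞 M => (x : M)) := RingOfIntegers.coe_injective
  obtain ⟨ζ', rfl⟩ : ∃ z : 𝓞 M, (z : M) = ζ :=
    ⟨⟨ζ, hζ.isIntegral hn'⟩, rfl⟩
  have hwint : IsIntegral ℤ w := by
    refine IsIntegral.of_pow hn' ?_
    rw [hw]
    exact ((RingOfIntegers.isIntegral_coe (u : 𝓞 K))).algebraMap
  obtain ⟨w', rfl⟩ : ∃ z : 𝓞 M, (z : M) = w := ⟨⟨w, hwint⟩, rfl⟩
  have hw' : w' ^ n = algebraMap (𝓞 K) (𝓞 M) u := by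
    apply hinj
    exact hw
  have hζ' : IsPrimitiveRoot ζ' n :=
    IsPrimitiveRoot.of_map_of_injective (f := algebraMap (𝓞 M) M) hζ hinj
  have hτζ' : τ ζ' = ζ' := hinj (by simp only [hττ, hτζ])
  have hτK : ∀ x : 𝓞 K, τ (algebraMap (𝓞 K) (𝓞 M) x) = algebraMap (𝓞 K) (𝓞 M) x := by
    intro x
    apply hinj
    simp only [hττ]
    exact τ'.commutes (x : K)
  have hwu : IsUnit w' := by
    have : IsUnit (w' ^ n) := by rw [hw']; exact (u.isUnit).map _
    exact (isUnit_pow_iff hn).1 this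
  have := hR
  obtain ⟨η, hη, hmem⟩ : ∃ η ∈ Polynomial.nthRootsFinset n (1 : 𝓞 M),
      w' - η * algebraMap (𝓞 K) (𝓞 M) t ∈ R := by
    have := hζ'.pow_sub_pow_eq_prod_sub_mul w' (algebraMap (𝓞 K) (𝓞 M) t) hn'
    rw [hw', ← map_pow, ← map_sub] at this
    rw [this] at ht
    exact (Ideal.IsPrime.prod_mem_iff).1 ht
  have hη1 : η ^ n = 1 := (Polynomial.mem_nthRootsFinset hn' 1).1 hη
  obtain ⟨i, -, rfl⟩ := hζ'.eq_pow_of_pow_eq_one hη1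
  have h1 : τ w' - w' ∈ R := by
    have := R.sub_mem (hτR _ hmem) hmem
    simpa [hτζ', hτK] using this
  obtain ⟨v, hv⟩ := hwu.exists_right_inv
  have h2 : τ w' * v - 1 ∈ R := by
    have := R.mul_mem_right v h1
    rwa [sub_mul, hv] at this
  have h3 : (τ w' * v) ^ n = 1 := by
    rw [mul_pow, ← map_pow, hw', hτK, ← hw', ← mul_pow, hv, one_pow]
  by_cases h4 : τ w' * v = 1
  · have h5 : τ w' = w' := by
      calc τ w' = τ w' * v * w' := by rw [mul_assoc, mul_comm v, hv, mul_one]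
        _ = w' := by rw [h4, one_mul]
    rw [← hττ, h5]
  · -- a nontrivial `n`-th root of unity congruent to `1` modulo `R` would force `n ∈ R`
    exfalso
    have h5 : ∑ i ∈ Finset.range n, (τ w' * v) ^ i = 0 := by
      have := geom_sum_mul (τ w' * v) n
      rw [h3, sub_self] at this
      exact (mul_eq_zero.1 this).resolve_right (sub_ne_zero.2 h4)
    apply hnR
    have h6 : Ideal.Quotient.mk R (τ w' * v) = 1 := by
      rw [← map_one (Ideal.Quotient.mk R)]
      exact Ideal.Quotient.eq.2 h2
    rw [← Ideal.Quotient.eq_zero_iff_mem]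
    have := congrArg (Ideal.Quotient.mk R) h5
    simpa only [map_sum, map_pow, h6, one_pow, Finset.sum_const, Finset.card_range, nsmul_eq_mul,
      mul_one, map_zero, map_natCast] using this
end Kummer

section Schinzel

/-- An argument of Schinzel: if the `n`-th roots of `u ≠ 0` generate an abelian extension of `K`, then
`u ^ w` is an `n`-th power in `K`, `w` being the number of roots of unity of `K`. -/
lemma schinzel {K M : Type*} [Field K] [NumberField K] [Field M] [NumberField M]
    [Algebra K M] [IsGalois K M] (n : ℕ) (hn : n ≠ 0) (u : K) (hu : u ≠ 0) (ζ w : M)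
    (hζ : IsPrimitiveRoot ζ n) (hw : w ^ n = algebraMap K M u)
    (hcomm : ∀ σ τ : Gal(M/K), σ * τ = τ * σ) :
    ∃ y : K, y ^ n = u ^ Units.torsionOrder K := by
  have : NeZero n := ⟨hn⟩
  have hum : algebraMap K M u ≠ 0 := (map_ne_zero _).2 hu
  have hw0 : w ≠ 0 := by
    rintro rfl
    rw [zero_pow hn] at hw
    exact hum hw.symm
  have hζ0 : ζ ≠ 0 := hζ.ne_zero hn
  have hpow : ∀ σ : Gal(M/K), ∃ a : ℕ, σ ζ = ζ ^ a := by
    intro σ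
    have : (σ ζ) ^ n = 1 := by rw [← map_pow, hζ.pow_eq_one, map_one]
    obtain ⟨a, -, ha⟩ := hζ.eq_pow_of_pow_eq_one this
    exact ⟨a, ha.symm⟩
  have hwpow : ∀ σ : Gal(M/K), ∃ b : ℕ, σ w = ζ ^ b * w := by
    intro σ
    have : (σ w / w) ^ n = 1 := by
      rw [div_pow, ← map_pow, hw, σ.commutes, div_self hum]
    obtain ⟨b, -, hb⟩ := hζ.eq_pow_of_pow_eq_one this
    exact ⟨b, by rw [hb, div_mul_cancel₀ _ hw0]⟩
  -- the exponents `k` for which `u ^ k` is an `n`-th power; with `g` a generator of `J`, the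
  -- field `K` turns out to contain a primitive `g`-th root of unity
  let J : AddSubgroup ℤ :=
    { carrier := {k | ∃ y : K, y ^ n = u ^ k}
      zero_mem' := ⟨1, by simp⟩
      add_mem' := by
        rintro a b ⟨y, hy⟩ ⟨z, hz⟩
        exact ⟨y * z, by rw [mul_pow, hy, hz, zpow_add₀ hu]⟩
      neg_mem' := by
        rintro a ⟨y, hy⟩
        exact ⟨y⁻¹, by rw [inv_pow, hy, zpow_neg]⟩ }
  have hJn : (n : ℤ) ∈ J := ⟨u, by simp⟩
  have hJa : ∀ (σ : Gal(M/K)) (a : ℕ), σ ζ = ζ ^ a → (1 - a : ℤ) ∈ J := by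
    intro σ a ha
    -- commutativity makes `σ w / w ^ a`, whose `n`-th power is `u ^ (1 - a)`, an element of `K`
    have hfix : ∀ τ : Gal(M/K), τ (σ w / w ^ a) = σ w / w ^ a := by
      intro τ
      obtain ⟨b, hb⟩ := hwpow τ
      have h1 : τ (σ w) = σ (τ w) := DFunLike.congr_fun (hcomm τ σ) w
      rw [map_div₀, h1, map_pow, hb, map_mul, map_pow, ha, mul_pow, ← pow_mul, ← pow_mul,
        mul_comm a b]
      field_simp
    obtain ⟨y, hy⟩ := (IsGalois.mem_range_algebraMap_iff_fixed _).2 hfix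
    refine ⟨y, (algebraMap K M).injective ?_⟩
    rw [map_pow, hy, div_pow, ← map_pow, hw, σ.commutes, ← pow_mul, mul_comm a n, pow_mul, hw,
      zpow_sub₀ hu]
    simp
  obtain ⟨g, hg⟩ := Int.subgroup_cyclic J
  have hmem : ∀ k : ℤ, k ∈ J ↔ g ∣ k := by
    intro k
    rw [hg, ← AddSubgroup.zmultiples_eq_closure]
    exact Int.mem_zmultiples_iff
  suffices hW : ((Units.torsionOrder K : ℕ) : ℤ) ∈ J by
    obtain ⟨y, hy⟩ := hW
    exact ⟨y, by simpa using hy⟩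
  rw [hmem, ← Int.natAbs_dvd]
  have hgn : g.natAbs ∣ n := by
    rw [← Int.natCast_dvd_natCast, Int.natAbs_dvd]; exact (hmem _).1 hJn
  obtain ⟨k, hk⟩ := hgn
  have hg0 : g.natAbs ≠ 0 := by
    intro h; rw [h, zero_mul] at hk; exact hn hk
  have : NeZero g.natAbs := ⟨hg0⟩
  have hprim : IsPrimitiveRoot (ζ ^ k) g.natAbs :=
    hζ.pow (Nat.pos_of_ne_zero hn) (by rw [hk, mul_comm])
  have hfix : ∀ σ : Gal(M/K), σ (ζ ^ k) = ζ ^ k := by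
    intro σ
    obtain ⟨a, ha⟩ := hpow σ
    obtain ⟨c, hc⟩ := (hmem _).1 (hJa σ a ha)
    have h1 : ζ ^ (((1 : ℤ) - a) * k) = 1 := by
      rw [hζ.zpow_eq_one_iff_dvd, hk]
      push_cast
      apply mul_dvd_mul_right
      rw [hc]
      exact (abs_dvd _ _).2 (dvd_mul_right _ _)
    rw [sub_mul, one_mul, zpow_sub₀ hζ0, div_eq_one_iff_eq (zpow_ne_zero _ hζ0)] at h1
    rw [map_pow, ha, ← pow_mul]
    exact_mod_cast h1.symm
  obtain ⟨z, hz⟩ := (IsGalois.mem_range_algebraMap_iff_fixed _).2 hfix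
  have hzp : IsPrimitiveRoot z g.natAbs := by
    rw [← hz] at hprim
    exact hprim.of_map_of_injective (algebraMap K M).injective
  exact_mod_cast Units.dvd_torsionOrder_of_isPrimitiveRoot hzp

/-- If a unit `u` is an `n`-th power modulo every prime not dividing `n`, then `u ^ w` is an `n`-th
power, `w` being the number of roots of unity of `K`. The hypothesis makes all decomposition groups
of `K(ζ_n, u ^ (1 / n)) / K(ζ_n)` at primes not dividing `n` trivial, so these two fields are equal
and abelian over `K`, and the argument of `schinzel` applies. -/
lemma unit_pow_of_local {K : Type*} [Field K] [NumberField K] (n : ℕ) (hn : n ≠ 0) (u : (𝓞 K)ˣ)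
    (hu : ∀ P : Ideal (𝓞 K), P.IsPrime → P ≠ ⊥ → (n : 𝓞 K) ∉ P → ∃ t : 𝓞 K,
      (u : 𝓞 K) - t ^ n ∈ P) :
    ∃ y : (𝓞 K)ˣ, y ^ n = u ^ Units.torsionOrder K := by
  have hu0 : ((u : 𝓞 K) : K) ≠ 0 := by
    simp
  obtain ⟨M, _, _, _, _, ζ, w, hζ, hw, hfix⟩ := exists_kummer_field n hn ((u : 𝓞 K) : K) hu0
  have htriv : ∀ σ : Gal(M/K), σ ζ = ζ → σ = 1 := by
    let L := IntermediateField.adjoin K {ζ}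
    have : NumberField L := NumberField.of_module_finite K L
    have hL : ∀ τ : Gal(M/L), τ = 1 := by
      apply galois_trivial_of_stabilizer n hn
      intro R hR hR0 hnR τ hτ
      have hτ1 : τ.restrictScalars K = 1 := by
        have hζL : τ ζ = ζ := τ.commutes ⟨ζ, IntermediateField.mem_adjoin_simple_self K ζ⟩
        apply hfix _ hζL
        obtain ⟨t, ht⟩ := hu (R.under (𝓞 K)) inferInstance
          (fun h => hR0 (Ideal.eq_bot_of_comap_eq_bot h)) (by simpa [Ideal.mem_comap] using hnR)
        refine kummer_local n hn u ζ w hζ hw R hR hnR t ht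
          (MulSemiringAction.toRingHom Gal(M/L) (𝓞 M) τ) (τ.restrictScalars K) (fun x => rfl) hζL ?_
        intro x hx
        rw [← hτ]
        exact Ideal.smul_mem_pointwise_smul τ x R hx
      ext x
      exact DFunLike.congr_fun hτ1 x
    intro σ hσ
    have hσL : σ ∈ L.fixingSubgroup := by
      rw [IntermediateField.mem_fixingSubgroup_iff]
      have : L ≤ IntermediateField.fixedField (Subgroup.zpowers σ) := by
        rw [IntermediateField.adjoin_le_iff]
        rw [Set.singleton_subset_iff]
        rintro ⟨τ, hτ⟩
        have : Subgroup.zpowers σ ≤ MulAction.stabilizer Gal(M/K) ζ := by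
          rw [Subgroup.zpowers_le]; exact hσ
        exact this hτ
      intro x hx
      exact this hx ⟨σ, Subgroup.mem_zpowers σ⟩
    have h1 := hL (IntermediateField.fixingSubgroupEquiv L ⟨σ, hσL⟩)
    ext x
    exact DFunLike.congr_fun h1 x
  have hcomm : ∀ σ τ : Gal(M/K), σ * τ = τ * σ := by
    have : NeZero n := ⟨hn⟩
    have hpow : ∀ σ : Gal(M/K), ∃ a : ℕ, σ ζ = ζ ^ a := by
      intro σ
      have : (σ ζ) ^ n = 1 := by rw [← map_pow, hζ.pow_eq_one, map_one]
      obtain ⟨a, -, ha⟩ := hζ.eq_pow_of_pow_eq_one this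
      exact ⟨a, ha.symm⟩
    intro σ τ
    have := htriv ((τ * σ)⁻¹ * (σ * τ)) (by
      have h : (σ * τ) ζ = (τ * σ) ζ := by
        obtain ⟨a, ha⟩ := hpow σ
        obtain ⟨b, hb⟩ := hpow τ
        simp only [AlgEquiv.mul_apply, ha, hb, map_pow, ← pow_mul, mul_comm]
      rw [AlgEquiv.mul_apply, h, ← AlgEquiv.mul_apply, inv_mul_cancel]; rfl)
    exact (inv_mul_eq_one.1 this).symm
  obtain ⟨y, hy⟩ := schinzel n hn _ hu0 ζ w hζ hw hcomm
  have hyint : IsIntegral ℤ y := by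
    refine IsIntegral.of_pow (Nat.pos_of_ne_zero hn) ?_
    rw [hy]
    exact (RingOfIntegers.isIntegral_coe (u : 𝓞 K)).pow _
  obtain ⟨z, rfl⟩ : ∃ z : 𝓞 K, (z : K) = y := ⟨⟨y, hyint⟩, rfl⟩
  have hz : z ^ n = (u : 𝓞 K) ^ Units.torsionOrder K :=
    RingOfIntegers.coe_injective (by simpa using hy)
  have hzu : IsUnit z := by
    rw [← isUnit_pow_iff hn, hz]
    exact u.isUnit.pow _
  obtain ⟨v, rfl⟩ := hzu
  exact ⟨v, Units.ext (by simpa using hz)⟩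

end Schinzel

/-! ### The theorem of Chevalley on units -/

section Chevalley

lemma exists_not_eq_smul {M : Type*} [AddCommGroup M] [Module.Finite ℤ M] [Module.Free ℤ M]
    (x : M) (hx : x ≠ 0) : ∃ m : ℤ, m ≠ 0 ∧ ∀ y : M, x ≠ m • y := by
  let b := Module.Free.chooseBasis ℤ M
  obtain ⟨i, hi⟩ : ∃ i, b.repr x i ≠ 0 := by
    by_contra! h
    exact hx (b.repr.map_eq_zero_iff.1 (Finsupp.ext h))
  refine ⟨2 * b.repr x i, mul_ne_zero two_ne_zero hi, ?_⟩
  intro y hy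
  have h1 : b.repr x i = 2 * b.repr x i * b.repr y i := by
    conv_lhs => rw [hy]
    simp
  have h2 : (b.repr x i) * (2 * b.repr y i - 1) = 0 := by linarith
  rcases mul_eq_zero.1 h2 with h | h
  · exact hi h
  · omega

/-- A finite family of nonzero elements of a lattice avoids `m L` for some nonzero `m`. -/
lemma exists_forall_not_eq_smul {M ι : Type*} [AddCommGroup M] [Module.Finite ℤ M]
    [Module.Free ℤ M] [Finite ι] (x : ι → M) :
    ∃ m : ℤ, m ≠ 0 ∧ ∀ i, x i ≠ 0 → ∀ y : M, x i ≠ m • y := by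
  classical
  have := Fintype.ofFinite ι
  have h : ∀ i, ∃ m : ℤ, m ≠ 0 ∧ (x i ≠ 0 → ∀ y : M, x i ≠ m • y) := by
    intro i
    by_cases hi : x i = 0
    · exact ⟨1, one_ne_zero, fun h => absurd hi h⟩
    · obtain ⟨m, hm, h⟩ := exists_not_eq_smul (x i) hi
      exact ⟨m, hm, fun _ => h⟩
  choose m hm h using h
  refine ⟨∏ i, m i, Finset.prod_ne_zero_iff.2 fun i _ => hm i, ?_⟩
  intro i hi y hy
  apply h i hi ((∏ j ∈ Finset.univ.erase i, m j) • y)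
  rw [hy, smul_smul, Finset.mul_prod_erase _ _ (Finset.mem_univ i)]

lemma finite_quotient_pow {A : Type*} [CommGroup A] [Monoid.FG A] (n : ℕ) (hn : n ≠ 0) :
    Finite (A ⧸ (powMonoidHom n : A →* A).range) := by
  have : Group.FG A := Group.fg_iff_monoid_fg.2 inferInstance
  apply CommGroup.finite_of_fg_isMulTorsion
  intro q
  induction q using QuotientGroup.induction_on with | H a => ?_
  refine isOfFinOrder_iff_pow_eq_one.2 ⟨n, Nat.pos_of_ne_zero hn, ?_⟩
  rw [← QuotientGroup.mk_pow, QuotientGroup.eq_one_iff]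
  exact ⟨a, rfl⟩

variable {K : Type*} [Field K] [NumberField K]

/-- Units congruent to `1` modulo a suitable `m` are local `n`-th powers. There are finitely many
classes of units modulo `n`-th powers; for each class which fails to be an `n`-th power modulo some
prime, the norm of such a prime is made a factor of `m`. -/
lemma exists_congruence_local (n : ℕ) (hn : n ≠ 0) :
    ∃ m : ℤ, m ≠ 0 ∧ ∀ u : (𝓞 K)ˣ, (m : 𝓞 K) ∣ (u : 𝓞 K) - 1 →
      ∀ P : Ideal (𝓞 K), P.IsPrime → P ≠ ⊥ → (n : 𝓞 K) ∉ P → ∃ t : 𝓞 K,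
      (u : 𝓞 K) - t ^ n ∈ P := by
  classical
  let Q := (𝓞 K)ˣ ⧸ (powMonoidHom n : (𝓞 K)ˣ →* (𝓞 K)ˣ).range
  have : Finite Q := finite_quotient_pow n hn
  have := Fintype.ofFinite Q
  have key : ∀ q : Q, ∃ m : ℤ, m ≠ 0 ∧ ((∀ P : Ideal (𝓞 K), P.IsPrime → P ≠ ⊥ → (n : 𝓞 K) ∉ P →
      ∃ t : 𝓞 K, (q.out : 𝓞 K) - t ^ n ∈ P) ∨ ∃ P : Ideal (𝓞 K), (m : 𝓞 K) ∈ P ∧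
      ∀ t : 𝓞 K, (q.out : 𝓞 K) - t ^ n ∉ P) := by
    intro q
    by_cases h : ∀ P : Ideal (𝓞 K), P.IsPrime → P ≠ ⊥ → (n : 𝓞 K) ∉ P →
      ∃ t : 𝓞 K, (q.out : 𝓞 K) - t ^ n ∈ P
    · exact ⟨1, one_ne_zero, Or.inl h⟩
    · push Not at h
      obtain ⟨P, -, hP, -, ht⟩ := h
      refine ⟨Ideal.absNorm P, ?_, Or.inr ⟨P, ?_, ht⟩⟩
      · exact_mod_cast Ideal.absNorm_eq_zero_iff.not.2 hP
      · exact_mod_cast Ideal.absNorm_mem P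
  choose m hm0 hm using key
  refine ⟨∏ q, m q, Finset.prod_ne_zero_iff.2 fun i _ => hm0 i, ?_⟩
  intro u hu
  obtain ⟨y, hy⟩ : ∃ y : (𝓞 K)ˣ, u = (QuotientGroup.mk u : Q).out * y ^ n := by
    have : (QuotientGroup.mk u : Q) = QuotientGroup.mk ((QuotientGroup.mk u : Q).out) :=
      (Quotient.out_eq _).symm
    obtain ⟨y, hy⟩ := QuotientGroup.eq.1 this.symm
    exact ⟨y, by rw [← powMonoidHom_apply, hy, mul_inv_cancel_left]⟩
  set q : Q := QuotientGroup.mk u with hq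
  rcases hm q with h | ⟨P, hmP, hP⟩
  · intro P h1 h2 h3
    obtain ⟨t, ht⟩ := h P h1 h2 h3
    refine ⟨t * y, ?_⟩
    have := P.mul_mem_right ((y : 𝓞 K) ^ n) ht
    rw [hy]
    convert this using 1
    push_cast
    ring
  · exfalso
    have h1 : (u : 𝓞 K) - 1 ∈ P := by
      refine P.mem_of_dvd hu ?_
      rw [← Finset.mul_prod_erase _ _ (Finset.mem_univ q), Int.cast_mul]
      exact P.mul_mem_right _ hmP
    apply hP ((y⁻¹ : (𝓞 K)ˣ) : 𝓞 K)
    have h2 := P.mul_mem_right (((y⁻¹ : (𝓞 K)ˣ) : 𝓞 K) ^ n) h1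
    convert h2 using 1
    have h3 : q.out = u * (y⁻¹) ^ n := by rw [inv_pow]; exact eq_mul_inv_of_mul_eq hy.symm
    rw [h3]
    push_cast
    ring

/-- The theorem of Chevalley for the unit group of a number field: the subgroup of `k`-th powers
contains the units congruent to `1` modulo a suitable nonzero integer. -/
theorem chevalley_units (k : ℕ) (hk : k ≠ 0) :
    ∃ m : ℤ, m ≠ 0 ∧ ∀ u : (𝓞 K)ˣ, (m : 𝓞 K) ∣ (u : 𝓞 K) - 1 → ∃ y : (𝓞 K)ˣ, u = y ^ k := by
  -- no root of unity other than `1` is congruent to `1` modulo `m₀`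
  obtain ⟨m₀, hm₀, htors⟩ := exists_forall_not_eq_smul
    (fun ξ : Units.torsion K => (((ξ : (𝓞 K)ˣ) : 𝓞 K) - 1))
  let I : Ideal (𝓞 K) := Ideal.span {(m₀ : 𝓞 K)}
  have hI : I ≠ ⊥ := by
    rw [Ne, Ideal.span_singleton_eq_bot]; exact_mod_cast hm₀
  have : Finite (𝓞 K ⧸ I) := I.finiteQuotientOfFreeOfNeBot hI
  let t := Nat.card (𝓞 K ⧸ I)ˣ
  have ht0 : t ≠ 0 := Nat.card_pos.ne'
  have ht : ∀ y : (𝓞 K)ˣ, (m₀ : 𝓞 K) ∣ ((y ^ t : (𝓞 K)ˣ) : 𝓞 K) - 1 := by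
    intro y
    have h1 : (Units.map (Ideal.Quotient.mk I).toMonoidHom y) ^ t = 1 := pow_card_eq_one'
    rw [← Ideal.mem_span_singleton]
    change _ ∈ I
    rw [← Ideal.Quotient.eq_zero_iff_mem, map_sub, map_one, sub_eq_zero]
    have := congrArg Units.val h1
    simpa using this
  set W := Units.torsionOrder K with hW
  have hW0 : W ≠ 0 := Units.torsionOrder_ne_zero K
  have hn : t * k * W ≠ 0 := by positivity
  -- `u ^ W = y ^ (t k W)` gives `u = ξ y ^ (t k)` with `ξ` a root of unity; as `t`-th powers are
  -- congruent to `1` modulo `m₀`, so is `ξ`, hence `ξ = 1`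
  obtain ⟨m₁, hm₁, hloc⟩ := exists_congruence_local (K := K) (t * k * W) hn
  refine ⟨m₀ * m₁, mul_ne_zero hm₀ hm₁, ?_⟩
  intro u hu
  rw [Int.cast_mul] at hu
  have hu0 : (m₀ : 𝓞 K) ∣ (u : 𝓞 K) - 1 := (Dvd.intro _ rfl).trans hu
  have hu1 : (m₁ : 𝓞 K) ∣ (u : 𝓞 K) - 1 := (Dvd.intro_left _ rfl).trans hu
  obtain ⟨y, hy⟩ := unit_pow_of_local (t * k * W) hn u (hloc u hu1)
  refine ⟨y ^ t, ?_⟩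
  let ξ : (𝓞 K)ˣ := u * ((y ^ k) ^ t)⁻¹
  have hξ : ξ ∈ Units.torsion K := by
    refine (CommGroup.mem_torsion _).2 (isOfFinOrder_iff_pow_eq_one.2
      ⟨W, Nat.pos_of_ne_zero hW0, ?_⟩)
    rw [mul_pow, ← hy, pow_mul, inv_pow, ← pow_mul y k t, mul_comm k t, mul_inv_cancel]
  have hdvd : (m₀ : 𝓞 K) ∣ (ξ : 𝓞 K) - 1 := by
    have h1 := dvd_sub hu0 (ht (y ^ k))
    have h2 := h1.mul_right ((((y ^ k) ^ t)⁻¹ : (𝓞 K)ˣ) : 𝓞 K)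
    convert h2 using 1
    rw [sub_sub_sub_cancel_right, sub_mul, ← Units.val_mul, ← Units.val_mul, mul_inv_cancel]
    simp [ξ]
  have hξ1 : ξ = 1 := by
    by_contra hne
    obtain ⟨z, hz⟩ := hdvd
    refine htors ⟨ξ, hξ⟩ ?_ z ?_
    · exact fun h => hne (Units.ext (sub_eq_zero.1 h))
    · rw [zsmul_eq_mul]; exact hz
  rw [mul_inv_eq_one.1 hξ1, ← pow_mul, ← pow_mul, mul_comm]
end Chevalley

end UnitsOfNumberFields

/-! ### The congruence subgroup property for actions on lattices -/

section Lattices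

/-- A submodule `W` of a `ℤ`-module is pure if the quotient by it is torsion-free. -/
def IsPure {M : Type*} [AddCommGroup M] (W : Submodule ℤ M) : Prop :=
  ∀ (c : ℤ) (x : M), c ≠ 0 → c • x ∈ W → x ∈ W

lemma IsPure.free_quotient {M : Type*} [AddCommGroup M] [Module.Finite ℤ M]
    {W : Submodule ℤ M} (hW : IsPure W) : Module.Free ℤ (M ⧸ W) := by
  have : Module.IsTorsionFree ℤ (M ⧸ W) := by
    rw [Module.isTorsionFree_iff_smul_eq_zero]
    intro c x hcx
    induction x using Submodule.Quotient.induction_on with | H x => ?_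
    by_cases hc : c = 0
    · exact Or.inl hc
    · right
      rw [← Submodule.Quotient.mk_smul, Submodule.Quotient.mk_eq_zero] at hcx
      rw [Submodule.Quotient.mk_eq_zero]
      exact hW c x hc hcx
  infer_instance

/-- The torsion of a finitely generated quotient has bounded exponent. -/
lemma exists_torsion_exponent {M : Type*} [AddCommGroup M] [Module.Finite ℤ M]
    (E : Submodule ℤ M) :
    ∃ q : ℕ, q ≠ 0 ∧ ∀ (c : ℤ) (f : M), c ≠ 0 → c • f ∈ E → q • f ∈ E := by
  let T := Submodule.torsion ℤ (M ⧸ E)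
  have : Finite T := Module.finite_of_fg_torsion T (Submodule.torsion_isTorsion)
  refine ⟨Nat.card T, Nat.card_pos.ne', ?_⟩
  intro c f hc hcf
  have hf : (Submodule.Quotient.mk f : M ⧸ E) ∈ T := by
    rw [Submodule.mem_torsion_iff]
    refine ⟨⟨c, mem_nonZeroDivisors_of_ne_zero hc⟩, ?_⟩
    rw [Submonoid.mk_smul, ← Submodule.Quotient.mk_smul, Submodule.Quotient.mk_eq_zero]
    exact hcf
  have h1 : Nat.card T • (⟨_, hf⟩ : T) = 0 := card_nsmul_eq_zero'
  have h2 := congrArg Subtype.val h1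
  rw [← Submodule.Quotient.mk_eq_zero]
  exact h2

lemma finite_quotient_smul {M : Type*} [AddCommGroup M] [Module.Finite ℤ M] (q : ℤ) (hq : q ≠ 0) :
    Finite (M ⧸ (LinearMap.range (q • (LinearMap.id : M →ₗ[ℤ] M)))) := by
  apply Module.finite_of_fg_torsion
  intro x
  induction x using Submodule.Quotient.induction_on with | H x => ?_
  refine ⟨⟨q, mem_nonZeroDivisors_of_ne_zero hq⟩, ?_⟩
  rw [Submonoid.mk_smul, ← Submodule.Quotient.mk_smul, Submodule.Quotient.mk_eq_zero]
  exact ⟨x, rfl⟩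

end Lattices

section CongruenceProperty

variable {Γ L : Type*} [Group Γ] [AddCommGroup L]

/-- The principal congruence subgroup of level `m` of a group acting on a lattice `L`: the elements
which act as `1 + m f` for some endomorphism `f` of `L`. -/
def levelSubgroup (ρ : Γ →* Module.End ℤ L) (m : ℤ) : Subgroup Γ where
  carrier := {g | ∃ f : Module.End ℤ L, ρ g = 1 + m • f}
  one_mem' := ⟨0, by simp⟩
  mul_mem' := by
    rintro a b ⟨f, hf⟩ ⟨f', hf'⟩
    refine ⟨f + f' + m • (f * f'), ?_⟩
    rw [map_mul, hf, hf']
    simp only [mul_add, add_mul, mul_one, one_mul, smul_add, mul_smul_comm, smul_mul_assoc]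
    abel
  inv_mem' := by
    rintro a ⟨f, hf⟩
    refine ⟨-(f * ρ a⁻¹), ?_⟩
    have h : ρ a * ρ a⁻¹ = 1 := by rw [← map_mul, mul_inv_cancel, map_one]
    rw [hf, add_mul, one_mul, smul_mul_assoc] at h
    rw [smul_neg, ← h]
    abel

lemma mem_levelSubgroup {ρ : Γ →* Module.End ℤ L} {m : ℤ} {g : Γ} :
    g ∈ levelSubgroup ρ m ↔ ∃ f : Module.End ℤ L, ρ g = 1 + m • f := Iff.rfl

lemma levelSubgroup_le_of_dvd (ρ : Γ →* Module.End ℤ L) {m m' : ℤ} (h : m ∣ m') :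
    levelSubgroup ρ m' ≤ levelSubgroup ρ m := by
  rintro g ⟨f, hf⟩
  obtain ⟨c, rfl⟩ := h
  exact ⟨c • f, by rw [hf, smul_smul]⟩

lemma levelSubgroup_finiteIndex [Module.Finite ℤ L] [Module.Free ℤ L]
    (ρ : Γ →* Module.End ℤ L) (m : ℤ) (hm : m ≠ 0) : (levelSubgroup ρ m).FiniteIndex := by
  have hfin := finite_quotient_smul (M := Module.End ℤ L) m hm
  have : Finite (Γ ⧸ levelSubgroup ρ m) := by
    refine Finite.of_injective (fun q : Γ ⧸ levelSubgroup ρ m =>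
      (Submodule.Quotient.mk (ρ q.out) : Module.End ℤ L ⧸
        (LinearMap.range (m • (LinearMap.id : Module.End ℤ L →ₗ[ℤ] Module.End ℤ L))))) ?_
    intro a b hab
    obtain ⟨f, hf⟩ := (Submodule.Quotient.eq _).1 hab.symm
    rw [← Quotient.out_eq a, ← Quotient.out_eq b]
    apply QuotientGroup.eq.2
    refine ⟨ρ a.out⁻¹ * f, ?_⟩
    have hf' : ρ b.out = ρ a.out + m • f := by
      rw [← sub_eq_iff_eq_add', ← hf]; rfl
    rw [map_mul, hf', mul_add, ← map_mul, inv_mul_cancel, map_one, mul_smul_comm]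
  exact Subgroup.finiteIndex_of_finite_quotient

/-- The congruence subgroup property, for subgroups containing the kernel of the action. -/
def CongruenceProperty (ρ : Γ →* Module.End ℤ L) : Prop :=
  ∀ H : Subgroup Γ, H.FiniteIndex → ρ.ker ≤ H → ∃ m : ℤ, m ≠ 0 ∧ levelSubgroup ρ m ≤ H

/-- The congruence subgroup property passes to extensions: it follows from the one for a coarser
action `ρ'` and the one for the kernel of `ρ'`. -/
lemma CongruenceProperty.extension [Module.Finite ℤ L] [Module.Free ℤ L]
    {L' : Type*} [AddCommGroup L'] (ρ : Γ →* Module.End ℤ L) (ρ' : Γ →* Module.End ℤ L')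
    (hle : ∀ m : ℤ, m ≠ 0 → levelSubgroup ρ m ≤ levelSubgroup ρ' m) (h' : CongruenceProperty ρ')
    (hk : CongruenceProperty (ρ.comp ρ'.ker.subtype)) : CongruenceProperty ρ := by
  intro H hH hker
  obtain ⟨q, hq0, hq⟩ := hk (H.subgroupOf ρ'.ker) inferInstance (by
    intro x hx
    exact hker hx)
  have hqf := levelSubgroup_finiteIndex ρ q hq0
  have hfi : ((H ⊓ levelSubgroup ρ q) ⊔ ρ'.ker).FiniteIndex :=
    Subgroup.finiteIndex_of_le le_sup_left
  obtain ⟨m, hm0, hm⟩ := h' _ hfi le_sup_right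
  refine ⟨m * q, mul_ne_zero hm0 hq0, ?_⟩
  intro x hx
  have hxq : x ∈ levelSubgroup ρ q := levelSubgroup_le_of_dvd ρ (Dvd.intro_left _ rfl) hx
  have hxm : x ∈ levelSubgroup ρ' m :=
    hle m hm0 (levelSubgroup_le_of_dvd ρ (Dvd.intro _ rfl) hx)
  obtain ⟨h, hh, k, hkk, rfl⟩ := Subgroup.mem_sup_of_normal_right.1 (hm hxm)
  refine H.mul_mem hh.1 ?_
  have hkq : k ∈ levelSubgroup ρ q := ((levelSubgroup ρ q).mul_mem_cancel_left hh.2).1 hxq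
  exact hq (show (⟨k, hkk⟩ : ρ'.ker) ∈ levelSubgroup _ q from hkq)

/-- The congruence subgroup property may be checked on a congruence subgroup. -/
lemma CongruenceProperty.of_subgroup (ρ : Γ →* Module.End ℤ L) (Γ₀ : Subgroup Γ)
    (m₀ : ℤ) (hm₀ : m₀ ≠ 0) (hle : levelSubgroup ρ m₀ ≤ Γ₀)
    (h : CongruenceProperty (ρ.comp Γ₀.subtype)) : CongruenceProperty ρ := by
  intro H hH hker
  obtain ⟨m, hm0, hm⟩ := h (H.subgroupOf Γ₀) inferInstance (fun x hx => hker hx)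
  refine ⟨m₀ * m, mul_ne_zero hm₀ hm0, ?_⟩
  intro x hx
  have hx0 : x ∈ Γ₀ := hle (levelSubgroup_le_of_dvd ρ (Dvd.intro _ rfl) hx)
  exact hm (show (⟨x, hx0⟩ : Γ₀) ∈ levelSubgroup _ m from
    levelSubgroup_le_of_dvd ρ (Dvd.intro_left _ rfl) hx)

/-- A subgroup of finite index cut out by a pure submodule `P` of `End L` is a congruence subgroup:
the representatives of the nontrivial cosets have nonzero images in the lattice `End L / P`, and a
suitable `m` divides none of these. -/
lemma exists_levelSubgroup_le_of_pure [Module.Finite ℤ L] [Module.Free ℤ L]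
    (ρ : Γ →* Module.End ℤ L)
    (P : Submodule ℤ (Module.End ℤ L)) (hP : IsPure P) (Γ₀ : Subgroup Γ)
    (hΓ₀ : ∀ g, g ∈ Γ₀ ↔ ρ g ∈ P) (hfi : Γ₀.FiniteIndex) :
    ∃ m : ℤ, m ≠ 0 ∧ levelSubgroup ρ m ≤ Γ₀ := by
  have := hP.free_quotient
  obtain ⟨m, hm0, hm⟩ := exists_forall_not_eq_smul
    (fun q : Γ ⧸ Γ₀ => (Submodule.Quotient.mk (ρ q.out) : Module.End ℤ L ⧸ P))
  refine ⟨m, hm0, ?_⟩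
  intro g hg
  by_contra hgΓ
  set q : Γ ⧸ Γ₀ := QuotientGroup.mk g with hq
  have hgq : g⁻¹ * q.out ∈ Γ₀ := by
    apply QuotientGroup.eq.1
    exact (Quotient.out_eq q).symm
  obtain ⟨f, hf⟩ := (levelSubgroup ρ m).inv_mem hg
  refine hm q ?_ (Submodule.Quotient.mk (-(f * ρ q.out))) ?_
  · rw [Ne, Submodule.Quotient.mk_eq_zero, ← hΓ₀]
    intro h
    have := Γ₀.mul_mem hgq (Γ₀.inv_mem h)
    rw [mul_inv_cancel_right] at this
    exact hgΓ (by simpa using Γ₀.inv_mem this)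
  · rw [hΓ₀, map_mul, hf, add_mul, one_mul, smul_mul_assoc] at hgq
    rw [← Submodule.Quotient.mk_smul]
    refine (Submodule.Quotient.eq P).2 ?_
    rw [smul_neg, sub_neg_eq_add]
    exact hgq

/-- A group acting trivially on `W` and on `L / W` has the congruence subgroup property: there
`g ↦ ρ g - 1` is a homomorphism to the finitely generated group `End L`. -/
lemma CongruenceProperty.of_unipotent [Module.Finite ℤ L] [Module.Free ℤ L]
    (ρ : Γ →* Module.End ℤ L) (W : Submodule ℤ L)
    (h1 : ∀ g, ∀ x ∈ W, ρ g x = x) (h2 : ∀ g x, ρ g x - x ∈ W) : CongruenceProperty ρ := by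
  have hmul : ∀ a b, ρ (a * b) - 1 = (ρ a - 1) + (ρ b - 1) := by
    intro a b
    ext x
    have h3 := h1 a _ (h2 b x)
    rw [map_sub] at h3
    simp only [map_mul, LinearMap.sub_apply, Module.End.mul_apply, Module.End.one_apply,
      LinearMap.add_apply]
    rw [sub_eq_iff_eq_add] at h3
    rw [h3]; abel
  let δ : Γ →* Multiplicative (Module.End ℤ L) :=
    { toFun := fun g => Multiplicative.ofAdd (ρ g - 1)
      map_one' := by simp
      map_mul' := fun a b => by rw [hmul]; rfl }
  intro H hH hker
  let e := H.normalCore.index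
  have he : e ≠ 0 := (Subgroup.finiteIndex_normalCore (H := H)).index_ne_zero
  have hpow : ∀ g : Γ, g ^ e ∈ H := fun g =>
    H.normalCore_le (Subgroup.pow_index_mem H.normalCore g)
  have hδpow : ∀ (g : Γ) (k : ℕ), ρ (g ^ k) - 1 = k • (ρ g - 1) := fun g k => map_pow δ g k
  let D : Submodule ℤ (Module.End ℤ L) := AddSubgroup.toIntSubmodule
    { carrier := {f | ∃ g, f = ρ (g ^ e) - 1}
      zero_mem' := ⟨1, by simp⟩
      add_mem' := by
        rintro _ _ ⟨a, rfl⟩ ⟨b, rfl⟩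
        refine ⟨a * b, ?_⟩
        rw [hδpow, hδpow, hδpow, hmul, smul_add]
      neg_mem' := by
        rintro _ ⟨a, rfl⟩
        refine ⟨a⁻¹, ?_⟩
        have := hmul (a ^ e) (a⁻¹ ^ e)
        rw [← (Commute.inv_right (Commute.refl a)).mul_pow] at this
        simp only [mul_inv_cancel, one_pow, map_one, sub_self] at this
        exact neg_eq_of_add_eq_zero_right this.symm }
  obtain ⟨q, hq0, hq⟩ := exists_torsion_exponent D
  refine ⟨q, by exact_mod_cast hq0, ?_⟩
  rintro x ⟨f, hf⟩
  have hf' : ρ x - 1 = (q : ℤ) • f := by rw [hf]; abel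
  have hmem : (q : ℤ) • f ∈ D := by
    have h3 : ((e * q : ℕ) : ℤ) • f ∈ D := by
      refine ⟨x, ?_⟩
      rw [hδpow, hf', natCast_zsmul, natCast_zsmul, mul_smul]
    have := hq _ f (by exact_mod_cast mul_ne_zero he hq0) h3
    rwa [natCast_zsmul]
  obtain ⟨g, hg⟩ := hmem
  have h4 : ρ x = ρ (g ^ e) := by
    rw [← hf'] at hg
    exact sub_left_injective hg
  have h5 : (g ^ e)⁻¹ * x ∈ ρ.ker := by
    rw [MonoidHom.mem_ker, map_mul, h4, ← map_mul, inv_mul_cancel, map_one]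
  simpa using H.mul_mem (hpow g) (hker h5)

/-- The action on an invariant submodule. -/
def subRep (ρ : Γ →* Module.End ℤ L) (W : Submodule ℤ L) (hW : ∀ g, ∀ x ∈ W, ρ g x ∈ W) :
    Γ →* Module.End ℤ W where
  toFun g := (ρ g).restrict (hW g)
  map_one' := by ext; simp
  map_mul' a b := by ext; simp

/-- The action on the quotient by an invariant submodule. -/
def quotRep (ρ : Γ →* Module.End ℤ L) (W : Submodule ℤ L) (hW : ∀ g, ∀ x ∈ W, ρ g x ∈ W) :
    Γ →* Module.End ℤ (L ⧸ W) where
  toFun g := W.mapQ W (ρ g) (hW g)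
  map_one' := by ext; simp
  map_mul' a b := by ext; simp

lemma levelSubgroup_le_subRep (ρ : Γ →* Module.End ℤ L) (W : Submodule ℤ L)
    (hW : ∀ g, ∀ x ∈ W, ρ g x ∈ W) (hpure : IsPure W) (m : ℤ) (hm : m ≠ 0) :
    levelSubgroup ρ m ≤ levelSubgroup (subRep ρ W hW) m := by
  rintro g ⟨f, hf⟩
  have hfW : ∀ x ∈ W, f x ∈ W := by
    intro x hx
    apply hpure m _ hm
    have := W.sub_mem (hW g x hx) hx
    rw [hf] at this
    simpa using this
  refine ⟨f.restrict hfW, ?_⟩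
  ext x
  simp [subRep, hf]

lemma levelSubgroup_le_quotRep (ρ : Γ →* Module.End ℤ L) (W : Submodule ℤ L)
    (hW : ∀ g, ∀ x ∈ W, ρ g x ∈ W) (hpure : IsPure W) (m : ℤ) (hm : m ≠ 0) :
    levelSubgroup ρ m ≤ levelSubgroup (quotRep ρ W hW) m := by
  rintro g ⟨f, hf⟩
  have hfW : ∀ x ∈ W, f x ∈ W := by
    intro x hx
    apply hpure m _ hm
    have := W.sub_mem (hW g x hx) hx
    rw [hf] at this
    simpa using this
  refine ⟨W.mapQ W f hfW, ?_⟩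
  ext x
  simp [quotRep, hf]

/-- The congruence subgroup property for the action on an invariant pure submodule `W`, together
with that for the action on `L / W` of the elements trivial on `W`, gives the one for `L`. -/
lemma CongruenceProperty.of_invariant [Module.Finite ℤ L] [Module.Free ℤ L]
    (ρ : Γ →* Module.End ℤ L) (W : Submodule ℤ L)
    (hW : ∀ g, ∀ x ∈ W, ρ g x ∈ W) (hpure : IsPure W)
    (h1 : CongruenceProperty (subRep ρ W hW))
    (h2 : CongruenceProperty ((quotRep ρ W hW).comp (subRep ρ W hW).ker.subtype)) :
    CongruenceProperty ρ := by
  refine .extension ρ (subRep ρ W hW) (levelSubgroup_le_subRep ρ W hW hpure) h1 ?_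
  refine .extension _ ((quotRep ρ W hW).comp (subRep ρ W hW).ker.subtype) ?_ h2 ?_
  · intro m hm g hg
    exact levelSubgroup_le_quotRep ρ W hW hpure m hm hg
  · refine .of_unipotent _ W ?_ ?_
    · rintro ⟨⟨g, hg⟩, hg'⟩ x hx
      have := LinearMap.congr_fun (MonoidHom.mem_ker.1 hg) ⟨x, hx⟩
      exact congrArg Subtype.val this
    · rintro ⟨⟨g, hg⟩, hg'⟩ x
      have := LinearMap.congr_fun (MonoidHom.mem_ker.1 hg') (Submodule.Quotient.mk x)
      exact (Submodule.Quotient.eq W).1 this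

end CongruenceProperty

/-! ### Centralizers and double centralizers -/

section RingLemmas

open Polynomial

lemma finite_roots_of_isDomain {R : Type*} [CommRing R] [IsDomain R] (p : ℤ[X]) (hp : p.Monic) :
    {r : R | aeval r p = 0}.Finite := by
  refine (p.rootSet_finite R).subset ?_
  intro r hr
  rw [mem_rootSet']
  exact ⟨(hp.map _).ne_zero, hr⟩

/-- A monic polynomial has finitely many roots in a reduced Noetherian ring, which embeds into a
finite product of domains. -/
lemma finite_roots_of_isReduced {R : Type*} [CommRing R] [IsNoetherianRing R] [IsReduced R]
    (p : ℤ[X]) (hp : p.Monic) : {r : R | aeval r p = 0}.Finite := by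
  have hfin : Finite (minimalPrimes R) := (minimalPrimes.finite_of_isNoetherianRing R).to_subtype
  let φ : R → ∀ P : minimalPrimes R, R ⧸ P.1 := fun r P => Ideal.Quotient.mk P.1 r
  have hinj : Function.Injective φ := by
    intro a b hab
    rw [← sub_eq_zero]
    have h1 : a - b ∈ sInf (minimalPrimes R) := by
      rw [Ideal.mem_sInf]
      intro P hP
      exact Ideal.Quotient.eq.1 (congrFun hab ⟨P, hP⟩)
    have h2 : sInf (minimalPrimes R) = nilradical R := Ideal.sInf_minimalPrimes
    rw [h2, nilradical_eq_zero] at h1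
    exact h1
  have h3 : (Set.univ.pi fun P : minimalPrimes R => {r : R ⧸ P.1 | aeval r p = 0}).Finite := by
    apply Set.Finite.pi
    intro P
    have : P.1.IsPrime := Ideal.IsMinimalPrime.isPrime P.2
    exact finite_roots_of_isDomain p hp
  refine Set.Finite.of_finite_image (f := φ) (h3.subset ?_) hinj.injOn
  rintro _ ⟨r, hr, rfl⟩ P -
  have h4 : Ideal.Quotient.mk P.1 (aeval r p) = 0 := by
    rw [show aeval r p = 0 from hr, map_zero]
  rw [aeval_def, hom_eval₂] at h4
  change aeval (Ideal.Quotient.mk P.1 r) p = 0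
  rw [aeval_def]
  convert h4 using 2
  exact RingHom.ext_int _ _

universe v

/-- The double centralizer of a commuting subset, as a commutative ring. -/
lemma exists_doubleCentralizer {E : Type v} [Ring E] [Module.Finite ℤ E] (s : Set E)
    (hs : ∀ a ∈ s, ∀ b ∈ s, Commute a b) :
    ∃ (R : Type v) (_ : CommRing R) (_ : Module.Finite ℤ R) (φ : R →+* E),
      Function.Injective φ ∧
      ∀ x, x ∈ φ.range ↔ ∀ y, (∀ a ∈ s, Commute a y) → Commute x y := by
  let R := Subring.centralizer (Subring.centralizer s : Set E)
  have hmem : ∀ x, x ∈ R ↔ ∀ y, (∀ a ∈ s, Commute a y) → Commute x y := by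
    intro x
    rw [Subring.mem_centralizer_iff]
    constructor
    · intro h y hy
      exact (h y (Subring.mem_centralizer_iff.2 hy)).symm
    · intro h y hy
      exact (h y (Subring.mem_centralizer_iff.1 hy)).symm
  have hcomm : ∀ x y : R, x * y = y * x := by
    rintro ⟨x, hx⟩ ⟨y, hy⟩
    refine Subtype.ext ?_
    refine (hmem x).1 hx y ?_
    intro a ha
    exact ((hmem y).1 hy a (fun b hb => hs b hb a ha)).symm
  let _ : CommRing R := { (inferInstance : Ring R) with mul_comm := hcomm }
  refine ⟨R, inferInstance, ?_, R.subtype, Subtype.val_injective, ?_⟩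
  · have : IsNoetherian ℤ E := isNoetherian_of_isNoetherianRing_of_finite ℤ E
    exact Module.Finite.of_injective (R.subtype.toAddMonoidHom.toIntLinearMap)
      Subtype.val_injective
  · intro x
    rw [Subring.range_subtype]
    exact hmem x

lemma aeval_mul_comm_of_semiconj {E : Type*} [Ring E] (g x y : E) (h : g * x = y * g) (p : ℤ[X]) :
    g * aeval x p = aeval y p * g := by
  induction p using Polynomial.induction_on' with
  | add p q hp hq => rw [map_add, map_add, mul_add, add_mul, hp, hq]
  | monomial n a =>
    rw [aeval_monomial, aeval_monomial]
    have h1 : g * x ^ n = y ^ n * g := (show SemiconjBy g x y from h).pow_right n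
    rw [← mul_assoc, ← Algebra.commutes a g, mul_assoc, h1, mul_assoc]

end RingLemmas

section GroupLemmas

/-- If `ρ` takes finitely many values on the conjugates of `c`, a subgroup of finite index
commutes with `ρ c`. -/
lemma exists_finiteIndex_commute {Γ E : Type*} [Group Γ] [Monoid E] (ρ : Γ →* E) (B : Subgroup Γ)
    (c : Γ) (h : {x : E | ∃ b ∈ B, x = ρ (b * c * b⁻¹)}.Finite) :
    ∃ C : Subgroup Γ, C ≤ B ∧ C.relIndex B ≠ 0 ∧ ∀ g ∈ C, Commute (ρ g) (ρ c) := by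
  let C : Subgroup Γ :=
    { carrier := {g | g ∈ B ∧ Commute (ρ g) (ρ c)}
      one_mem' := ⟨B.one_mem, by simp⟩
      mul_mem' := fun ha hb => ⟨B.mul_mem ha.1 hb.1, by
        rw [map_mul]; exact ha.2.mul_left hb.2⟩
      inv_mem' := by
        rintro a ⟨ha, hac⟩
        refine ⟨B.inv_mem ha, ?_⟩
        have h1 : ρ a⁻¹ * ρ a = 1 := by rw [← map_mul, inv_mul_cancel, map_one]
        have h2 : ρ a * ρ a⁻¹ = 1 := by rw [← map_mul, mul_inv_cancel, map_one]
        calc ρ a⁻¹ * ρ c = ρ a⁻¹ * ρ c * (ρ a * ρ a⁻¹) := by rw [h2, mul_one]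
          _ = ρ a⁻¹ * (ρ c * ρ a) * ρ a⁻¹ := by simp only [mul_assoc]
          _ = ρ a⁻¹ * (ρ a * ρ c) * ρ a⁻¹ := by rw [hac.eq]
          _ = (ρ a⁻¹ * ρ a) * ρ c * ρ a⁻¹ := by simp only [mul_assoc]
          _ = ρ c * ρ a⁻¹ := by rw [h1, one_mul] }
  refine ⟨C, fun g hg => hg.1, ?_, fun g hg => hg.2⟩
  have hfin : Finite {x : E | ∃ b ∈ B, x = ρ (b * c * b⁻¹)} := h.to_subtype
  have : Finite (B ⧸ C.subgroupOf B) := by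
    refine Finite.of_injective (fun q : B ⧸ C.subgroupOf B =>
      (⟨ρ ((q.out : Γ) * c * (q.out : Γ)⁻¹), _, q.out.2, rfl⟩ :
        {x : E | ∃ b ∈ B, x = ρ (b * c * b⁻¹)})) ?_
    intro a b hab
    have hab' : ρ ((a.out : Γ) * c * (a.out : Γ)⁻¹) = ρ ((b.out : Γ) * c * (b.out : Γ)⁻¹) :=
      congrArg Subtype.val hab
    rw [← Quotient.out_eq a, ← Quotient.out_eq b]
    apply QuotientGroup.eq.2
    rw [Subgroup.mem_subgroupOf]
    refine ⟨(a.out⁻¹ * b.out).2, ?_⟩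
    have h3 := congrArg (fun y => ρ (a.out : Γ)⁻¹ * y * ρ (b.out : Γ)) hab'
    simp only [← map_mul] at h3
    have h4 : ((a.out⁻¹ * b.out : B) : Γ) = (a.out : Γ)⁻¹ * (b.out : Γ) := rfl
    change ρ _ * ρ c = ρ c * ρ _
    rw [h4, ← map_mul, ← map_mul]
    have e1 : (a.out : Γ)⁻¹ * ((a.out : Γ) * c * (a.out : Γ)⁻¹) * (b.out : Γ)
      = c * ((a.out : Γ)⁻¹ * (b.out : Γ)) := by group
    have e2 : (a.out : Γ)⁻¹ * ((b.out : Γ) * c * (b.out : Γ)⁻¹) * (b.out : Γ)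
      = (a.out : Γ)⁻¹ * (b.out : Γ) * c := by group
    rw [e1, e2] at h3
    exact h3.symm
  have : (C.subgroupOf B).FiniteIndex := Subgroup.finiteIndex_of_finite_quotient
  exact this.index_ne_zero

/-- Among the subgroups of finite index of `B`, one has a centralizer which no further passage to
a subgroup of finite index enlarges. -/
lemma exists_maximal_centralizer {Γ E : Type*} [Group Γ] [Ring E] [Module.Finite ℤ E]
    (ρ : Γ →* E) (B : Subgroup Γ) :
    ∃ B' ≤ B, B'.relIndex B ≠ 0 ∧ ∀ B'' ≤ B', B''.relIndex B ≠ 0 →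
      ∀ x : E, (∀ g ∈ B'', Commute (ρ g) x) → ∀ g ∈ B', Commute (ρ g) x := by
  have hN : IsNoetherian ℤ E := isNoetherian_of_isNoetherianRing_of_finite ℤ E
  let cent : Subgroup Γ → Submodule ℤ E := fun B' => AddSubgroup.toIntSubmodule
    { carrier := {x | ∀ g ∈ B', Commute (ρ g) x}
      zero_mem' := fun g _ => Commute.zero_right _
      add_mem' := fun ha hb g hg => (ha g hg).add_right (hb g hg)
      neg_mem' := fun ha g hg => (ha g hg).neg_right }
  obtain ⟨M, ⟨B', ⟨hB', hfi⟩, rfl⟩, hM⟩ := set_has_maximal_iff_noetherian.2 hN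
    (cent '' {B' | B' ≤ B ∧ B'.relIndex B ≠ 0}) ⟨_, B, ⟨le_rfl, by simp⟩, rfl⟩
  refine ⟨B', hB', hfi, ?_⟩
  intro B'' hle hfi' x hx
  have h1 : cent B' ≤ cent B'' := fun y hy g hg => hy g (hle hg)
  have h2 := hM (cent B'') ⟨B'', ⟨hle.trans hB', hfi'⟩, rfl⟩
  have h3 : cent B' = cent B'' := by
    by_contra hne
    exact h2 (lt_of_le_of_ne h1 hne)
  have h4 : x ∈ cent B' := by rw [h3]; exact hx
  exact h4

end GroupLemmas

/-! ### Irreducible solvable groups of automorphisms of a lattice -/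

section Malcev

open Polynomial

variable {Γ L : Type*} [Group Γ] [AddCommGroup L]

/-- Rational irreducibility: no invariant pure submodules besides the two trivial ones. -/
def IsIrred (ρ : Γ →* Module.End ℤ L) : Prop :=
  ∀ W : Submodule ℤ L, IsPure W → (∀ g, ∀ x ∈ W, ρ g x ∈ W) → W = ⊥ ∨ W = ⊤

/-- Every endomorphism commuting with a subgroup of finite index commutes with the whole group. -/
def HasStableCentralizer (ρ : Γ →* Module.End ℤ L) : Prop :=
  ∀ C : Subgroup Γ, C.FiniteIndex → ∀ x : Module.End ℤ L,
    (∀ g ∈ C, Commute (ρ g) x) → ∀ g, Commute (ρ g) x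

lemma isPure_ker [Module.Free ℤ L] (f : Module.End ℤ L) : IsPure (LinearMap.ker f) := by
  intro c x hc hx
  rw [LinearMap.mem_ker, map_smul] at hx
  exact (smul_eq_zero.1 hx).resolve_left hc

lemma IsIrred.injective [Module.Free ℤ L] {ρ : Γ →* Module.End ℤ L} (h : IsIrred ρ)
    (x : Module.End ℤ L) (hx : x ≠ 0) (hc : ∀ g, Commute (ρ g) x) (v : L) (hv : x v = 0) :
    v = 0 := by
  rcases h (LinearMap.ker x) (isPure_ker x) (by
    intro g y hy
    have := LinearMap.congr_fun (hc g).eq y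
    simp only [Module.End.mul_apply] at this
    rw [LinearMap.mem_ker] at hy ⊢
    rw [← this, hy, map_zero]) with h1 | h1
  · have : v ∈ LinearMap.ker x := hv
    rw [h1] at this
    exact this
  · exact absurd (LinearMap.ker_eq_top.1 h1) hx

lemma IsIrred.eq_zero_of_mul [Module.Free ℤ L] {ρ : Γ →* Module.End ℤ L} (h : IsIrred ρ)
    (x y : Module.End ℤ L) (hx : x ≠ 0) (hc : ∀ g, Commute (ρ g) x) (hxy : x * y = 0) :
    y = 0 := by
  ext v
  exact h.injective x hx hc (y v) (LinearMap.congr_fun hxy v)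

variable [Module.Finite ℤ L] [Module.Free ℤ L]

lemma aeval_conj_charpoly (ρ : Γ →* Module.End ℤ L) (c g : Γ) :
    aeval (ρ (g * c * g⁻¹)) (ρ c).charpoly = 0 := by
  have h := aeval_mul_comm_of_semiconj (ρ g) (ρ c) (ρ (g * c * g⁻¹))
    (by rw [← map_mul, ← map_mul]; congr 1; group) (ρ c).charpoly
  rw [LinearMap.aeval_self_charpoly, mul_zero] at h
  have h2 := congrArg (· * ρ g⁻¹) h
  simp only [zero_mul] at h2
  rwa [mul_assoc, ← map_mul, mul_inv_cancel, map_one, mul_one, eq_comm] at h2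

lemma aeval_map_eq {R E : Type*} [CommRing R] [Ring E] (φ : R →+* E) (r : R) (p : ℤ[X]) :
    aeval (φ r) p = φ (aeval r p) := by
  rw [aeval_def, aeval_def, hom_eval₂]
  congr 1
  exact RingHom.ext_int _ _

/-- An abelian normal subgroup of an irreducible linear group with stable centralizer is central:
the double centralizer of `A` is a reduced ring, in which the conjugates of an element of `A`
are among the finitely many roots of its characteristic polynomial. -/
lemma commute_of_abelian_normal (ρ : Γ →* Module.End ℤ L) (hirr : IsIrred ρ)
    (hst : HasStableCentralizer ρ) (A : Subgroup Γ) (hA : A.Normal)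
    (hab : ∀ a ∈ A, ∀ b ∈ A, Commute (ρ a) (ρ b)) (a : Γ) (ha : a ∈ A) (g : Γ) :
    Commute (ρ g) (ρ a) := by
  have hinv : ∀ g : Γ, ρ g * ρ g⁻¹ = 1 := fun g => by rw [← map_mul, mul_inv_cancel, map_one]
  have hinv' : ∀ g : Γ, ρ g⁻¹ * ρ g = 1 := fun g => by rw [← map_mul, inv_mul_cancel, map_one]
  obtain ⟨R, _, _, φ, hφ, hmem⟩ := exists_doubleCentralizer (ρ '' A) (by
    rintro _ ⟨a, ha, rfl⟩ _ ⟨b, hb, rfl⟩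
    exact hab a ha b hb)
  have hNR : IsNoetherianRing R := IsNoetherianRing.of_finite ℤ R
  have hAR : ∀ b ∈ A, ρ b ∈ φ.range := fun b hb => (hmem _).2 fun y hy => hy _ ⟨b, hb, rfl⟩
  -- conjugation by an element of the group preserves the double centralizer
  have hconj : ∀ (g : Γ) (r : R), ∃ s : R, φ s = ρ g * φ r * ρ g⁻¹ := by
    intro g r
    refine (hmem _).2 ?_
    intro y hy
    have h1 : Commute (φ r) (ρ g⁻¹ * y * ρ g) := by
      refine (hmem _).1 ⟨r, rfl⟩ _ ?_
      rintro _ ⟨b, hb, rfl⟩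
      have h2 := hy _ ⟨g * b * g⁻¹, hA.conj_mem b hb g, rfl⟩
      have h3 : ρ (g * b * g⁻¹) * y = y * ρ (g * b * g⁻¹) := h2
      have h4 := congrArg (fun z => ρ g⁻¹ * z * ρ g) h3
      simp only [map_mul] at h4
      change ρ b * (ρ g⁻¹ * y * ρ g) = ρ g⁻¹ * y * ρ g * ρ b
      calc ρ b * (ρ g⁻¹ * y * ρ g) = (ρ g⁻¹ * ρ g) * ρ b * (ρ g⁻¹ * y * ρ g) := by
            rw [hinv', one_mul]
        _ = ρ g⁻¹ * (ρ g * ρ b * ρ g⁻¹ * y) * ρ g := by simp only [mul_assoc]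
        _ = ρ g⁻¹ * (y * (ρ g * ρ b * ρ g⁻¹)) * ρ g := h4
        _ = ρ g⁻¹ * y * ρ g * ρ b * (ρ g⁻¹ * ρ g) := by simp only [mul_assoc]
        _ = _ := by rw [hinv', mul_one]
    change ρ g * φ r * ρ g⁻¹ * y = y * (ρ g * φ r * ρ g⁻¹)
    calc ρ g * φ r * ρ g⁻¹ * y = ρ g * φ r * ρ g⁻¹ * y * (ρ g * ρ g⁻¹) := by
          rw [hinv, mul_one]
      _ = ρ g * (φ r * (ρ g⁻¹ * y * ρ g)) * ρ g⁻¹ := by simp only [mul_assoc]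
      _ = ρ g * (ρ g⁻¹ * y * ρ g * φ r) * ρ g⁻¹ := by rw [h1.eq]
      _ = (ρ g * ρ g⁻¹) * y * (ρ g * φ r * ρ g⁻¹) := by simp only [mul_assoc]
      _ = _ := by rw [hinv, one_mul]
  have hred : IsReduced R := by
    rw [← nilradical_eq_bot_iff]
    by_contra hN
    obtain ⟨k, hk⟩ := IsNoetherianRing.isNilpotent_nilradical R
    let V : Submodule ℤ L := ⨅ r ∈ nilradical R, LinearMap.ker (φ r)
    have hV : ∀ v, v ∈ V ↔ ∀ r ∈ nilradical R, φ r v = 0 := by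
      intro v
      simp [V, Submodule.mem_iInf]
    have hVpure : IsPure V := by
      intro c x hc hx
      rw [hV] at hx ⊢
      intro r hr
      exact isPure_ker (φ r) c x hc (hx r hr)
    have hVinv : ∀ g, ∀ x ∈ V, ρ g x ∈ V := by
      intro g x hx
      rw [hV] at hx ⊢
      intro r hr
      obtain ⟨s, hs⟩ := hconj g⁻¹ r
      have hs' : s ∈ nilradical R := by
        rw [mem_nilradical] at hr ⊢
        obtain ⟨j, hj⟩ := hr
        refine ⟨j, hφ ?_⟩
        have : SemiconjBy (ρ g⁻¹) (φ r) (φ s) := by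
          change ρ g⁻¹ * φ r = φ s * ρ g⁻¹
          rw [hs, inv_inv, mul_assoc _ (ρ g), hinv, mul_one]
        have h2 : ρ g⁻¹ * φ r ^ j = φ s ^ j * ρ g⁻¹ := this.pow_right j
        rw [← map_pow, hj, map_zero, mul_zero] at h2
        rw [map_zero, map_pow]
        have h3 := congrArg (· * ρ g) h2
        simp only [zero_mul, mul_assoc, hinv', mul_one] at h3
        exact h3.symm
      have h4 := hx s hs'
      rw [hs, inv_inv] at h4
      have h5 := congrArg (ρ g) h4
      rw [← Module.End.mul_apply, ← mul_assoc, ← mul_assoc, hinv, one_mul, map_zero] at h5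
      exact h5
    rcases hirr V hVpure hVinv with h | h
    · -- a power of the nilradical which is nonzero but killed by the nilradical
      have hex : ∃ k, nilradical R ^ k = 0 := ⟨k, hk⟩
      classical
      have hspec := Nat.find_spec hex
      rcases hkk : Nat.find hex with _ | j
      · rw [hkk, pow_zero, Ideal.one_eq_top] at hspec
        apply hN
        rw [eq_bot_iff]
        exact le_top.trans (le_of_eq hspec)
      · have hj : nilradical R ^ j ≠ 0 := Nat.find_min hex (by omega)
        obtain ⟨s, hs, hs0⟩ := Submodule.exists_mem_ne_zero_of_ne_bot hj
        rw [hkk, pow_succ'] at hspec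
        apply hs0
        apply hφ
        rw [map_zero]
        ext v
        have hmemV : φ s v ∈ V := by
          rw [hV]
          intro r hr
          have h6 : r * s ∈ nilradical R * nilradical R ^ j := Ideal.mul_mem_mul hr hs
          rw [hspec] at h6
          rw [← Module.End.mul_apply, ← map_mul, show r * s = 0 from h6, map_zero]
          rfl
        rw [h] at hmemV
        exact hmemV
    · apply hN
      rw [eq_bot_iff]
      intro r hr
      apply hφ
      rw [map_zero]
      ext v
      have : v ∈ V := by rw [h]; trivial
      exact (hV v).1 this r hr
  have hfin : {x : Module.End ℤ L | ∃ b ∈ (⊤ : Subgroup Γ), x = ρ (b * a * b⁻¹)}.Finite := by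
    refine ((finite_roots_of_isReduced (R := R) (ρ a).charpoly
      (LinearMap.charpoly_monic _)).image φ).subset ?_
    rintro _ ⟨b, -, rfl⟩
    obtain ⟨r, hr⟩ := hAR _ (hA.conj_mem a ha b)
    refine ⟨r, hφ ?_, hr⟩
    rw [← aeval_map_eq, hr, map_zero]
    exact aeval_conj_charpoly ρ a b
  obtain ⟨C, -, hCfi, hC⟩ := exists_finiteIndex_commute ρ ⊤ a hfin
  rw [Subgroup.relIndex_top_right] at hCfi
  exact hst C ⟨hCfi⟩ _ hC g

/-- The elements whose image is central in the image of `ρ`. -/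
def imageCenter (ρ : Γ →* Module.End ℤ L) : Subgroup Γ where
  carrier := {z | ∀ g, Commute (ρ g) (ρ z)}
  one_mem' := fun g => by simp
  mul_mem' := fun ha hb g => by rw [map_mul]; exact (ha g).mul_right (hb g)
  inv_mem' := by
    intro a ha g
    have h1 : ρ a⁻¹ * ρ a = 1 := by rw [← map_mul, inv_mul_cancel, map_one]
    have h2 : ρ a * ρ a⁻¹ = 1 := by rw [← map_mul, mul_inv_cancel, map_one]
    change ρ g * ρ a⁻¹ = ρ a⁻¹ * ρ g
    calc ρ g * ρ a⁻¹ = (ρ a⁻¹ * ρ a) * ρ g * ρ a⁻¹ := by rw [h1, one_mul]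
      _ = ρ a⁻¹ * (ρ a * ρ g) * ρ a⁻¹ := by simp only [mul_assoc]
      _ = ρ a⁻¹ * (ρ g * ρ a) * ρ a⁻¹ := by rw [(ha g).eq]
      _ = ρ a⁻¹ * ρ g * (ρ a * ρ a⁻¹) := by simp only [mul_assoc]
      _ = ρ a⁻¹ * ρ g := by rw [h2, mul_one]

/-- For fixed `c`, only finitely many central multiples of `c` are roots of a given monic
polynomial. They lie in a commutative ring `S`, and stay distinct modulo a minimal prime of `S`
because the difference of two of them is not a zero divisor. -/
lemma finite_central_multiples [Nontrivial L] (ρ : Γ →* Module.End ℤ L) (hirr : IsIrred ρ)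
    (c : Γ) (p : ℤ[X]) (hp : p.Monic) :
    {x : Module.End ℤ L | ∃ z ∈ imageCenter ρ, x = ρ (z * c) ∧ aeval x p = 0}.Finite := by
  obtain ⟨S, _, _, φ, hφ, hmem⟩ := exists_doubleCentralizer
    (insert (ρ c) (ρ '' (imageCenter ρ))) (by
      rintro _ (rfl | ⟨a, ha, rfl⟩) _ (rfl | ⟨b, hb, rfl⟩)
      · exact Commute.refl _
      · exact hb c
      · exact (ha c).symm
      · exact hb a)
  have hc : ρ c ∈ φ.range := (hmem _).2 fun y hy => hy _ (Set.mem_insert _ _)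
  have hz : ∀ z ∈ imageCenter ρ, ρ z ∈ φ.range := fun z hz =>
    (hmem _).2 fun y hy => hy _ (Set.mem_insert_of_mem _ ⟨z, hz, rfl⟩)
  obtain ⟨c', hc'⟩ := hc
  have : Nontrivial S := by
    refine ⟨0, 1, fun h => ?_⟩
    have h1 := congrArg φ h
    rw [map_zero, map_one] at h1
    exact zero_ne_one h1
  obtain ⟨P, hP⟩ : (minimalPrimes S).Nonempty := by
    obtain ⟨M, hM⟩ := Ideal.exists_maximal S
    obtain ⟨P, hP, -⟩ := Ideal.exists_minimalPrimes_le (bot_le : (⊥ : Ideal S) ≤ M)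
    exact ⟨P, hP⟩
  have hPp : P.IsPrime := Ideal.IsMinimalPrime.isPrime hP
  have hT : {s : S | (∃ z ∈ imageCenter ρ, φ s = ρ (z * c)) ∧ aeval s p = 0}.Finite := by
    refine Set.Finite.of_finite_image (f := Ideal.Quotient.mk P)
      ((finite_roots_of_isDomain (R := S ⧸ P) p hp).subset ?_) ?_
    · rintro _ ⟨s, ⟨-, hs⟩, rfl⟩
      change aeval _ p = 0
      rw [aeval_map_eq, hs, map_zero]
    · rintro s ⟨⟨z, hzc, hsz⟩, -⟩ t ⟨⟨z', hzc', htz⟩, -⟩ hst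
      have h1 : s - t ∈ P := Ideal.Quotient.eq.1 hst
      have h2 : s - t ∉ nonZeroDivisors S := fun h =>
        Set.disjoint_left.1 (Ideal.disjoint_nonZeroDivisors_of_mem_minimalPrimes hP) h1 h
      by_contra hne
      apply h2
      rw [mem_nonZeroDivisors_iff_right]
      intro r hr
      have h3 : (ρ z - ρ z') * (ρ c * φ r) = 0 := by
        rw [← mul_assoc, sub_mul, ← map_mul, ← map_mul, ← hsz, ← htz, ← map_sub, ← map_mul,
          mul_comm, hr, map_zero]
      have h4 : ρ z - ρ z' ≠ 0 := by
        intro h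
        apply hne
        apply hφ
        rw [hsz, htz, map_mul, map_mul, sub_eq_zero.1 h]
      have h5 := hirr.eq_zero_of_mul _ _ h4 (fun g => (hzc g).sub_right (hzc' g)) h3
      have h6 := congrArg (ρ c⁻¹ * ·) h5
      simp only [← mul_assoc, ← map_mul, inv_mul_cancel, map_one, one_mul, mul_zero] at h6
      exact hφ (by rw [h6, map_zero])
  refine (hT.image φ).subset ?_
  rintro _ ⟨z, hzz, rfl, hroot⟩
  obtain ⟨z', hz'⟩ := hz z hzz
  refine ⟨z' * c', ⟨⟨z, hzz, ?_⟩, hφ ?_⟩, ?_⟩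
  · rw [map_mul, hz', hc', map_mul]
  · rw [← aeval_map_eq, map_mul, hz', hc', ← map_mul, hroot, map_zero]
  · rw [map_mul, hz', hc', map_mul]

/-- A normal subgroup which is abelian modulo the centre is central. -/
lemma le_imageCenter_of_commutator [Nontrivial L] (ρ : Γ →* Module.End ℤ L) (hirr : IsIrred ρ)
    (hst : HasStableCentralizer ρ) (B : Subgroup Γ) (hB : B.Normal)
    (hcomm : ∀ a ∈ B, ∀ b ∈ B, a * b * a⁻¹ * b⁻¹ ∈ imageCenter ρ) : B ≤ imageCenter ρ := by
  obtain ⟨B', hB', hfi, hmax⟩ := exists_maximal_centralizer ρ B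
  -- `B'` is central in `B`, since each element of `B` has finitely many conjugates under `B`
  have hB'c : ∀ c ∈ B, ∀ g ∈ B', Commute (ρ g) (ρ c) := by
    intro c hc
    have hfin : {x : Module.End ℤ L | ∃ b ∈ B, x = ρ (b * c * b⁻¹)}.Finite := by
      refine (finite_central_multiples ρ hirr c (ρ c).charpoly
        (LinearMap.charpoly_monic _)).subset ?_
      rintro _ ⟨b, hb, rfl⟩
      refine ⟨b * c * b⁻¹ * c⁻¹, hcomm b hb c hc, ?_, aeval_conj_charpoly ρ c b⟩
      congr 1
      group
    obtain ⟨C, hCB, hCfi, hC⟩ := exists_finiteIndex_commute ρ B c hfin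
    refine hmax (B' ⊓ C) inf_le_left ?_ _ (fun g hg => hC g hg.2)
    exact Subgroup.relIndex_inf_ne_zero hfi hCfi
  -- the centre of `B`, as seen through `ρ`
  let A : Subgroup Γ :=
    { carrier := {a | a ∈ B ∧ ∀ b ∈ B, Commute (ρ b) (ρ a)}
      one_mem' := ⟨B.one_mem, fun b _ => by simp⟩
      mul_mem' := fun ha hb => ⟨B.mul_mem ha.1 hb.1, fun g hg => by
        rw [map_mul]; exact (ha.2 g hg).mul_right (hb.2 g hg)⟩
      inv_mem' := by
        rintro a ⟨ha, hac⟩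
        refine ⟨B.inv_mem ha, fun g hg => ?_⟩
        have h1 : ρ a⁻¹ * ρ a = 1 := by rw [← map_mul, inv_mul_cancel, map_one]
        have h2 : ρ a * ρ a⁻¹ = 1 := by rw [← map_mul, mul_inv_cancel, map_one]
        change ρ g * ρ a⁻¹ = ρ a⁻¹ * ρ g
        calc ρ g * ρ a⁻¹ = (ρ a⁻¹ * ρ a) * ρ g * ρ a⁻¹ := by rw [h1, one_mul]
          _ = ρ a⁻¹ * (ρ a * ρ g) * ρ a⁻¹ := by simp only [mul_assoc]
          _ = ρ a⁻¹ * (ρ g * ρ a) * ρ a⁻¹ := by rw [(hac g hg).eq]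
          _ = ρ a⁻¹ * ρ g * (ρ a * ρ a⁻¹) := by simp only [mul_assoc]
          _ = ρ a⁻¹ * ρ g := by rw [h2, mul_one] }
  have hAn : A.Normal := by
    refine ⟨fun a ha g => ⟨hB.conj_mem a ha.1 g, fun b hb => ?_⟩⟩
    have h1 := ha.2 (g⁻¹ * b * g) (by simpa using hB.conj_mem b hb g⁻¹)
    have h2 : ρ (g * (g⁻¹ * b * g * a) * g⁻¹) = ρ (g * (a * (g⁻¹ * b * g)) * g⁻¹) := by
      rw [map_mul, map_mul ρ g, map_mul ρ _ a, h1.eq, ← map_mul ρ a, ← map_mul, ← map_mul]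
    change ρ b * ρ _ = ρ _ * ρ b
    rw [← map_mul, ← map_mul]
    convert h2 using 2 <;> group
  have hBZ : B' ≤ imageCenter ρ := by
    intro a ha
    exact commute_of_abelian_normal ρ hirr hst A hAn (fun a ha b hb => hb.2 a ha.1) a
      ⟨hB' ha, fun b hb => (hB'c b hb a ha).symm⟩
  intro c hc
  have hfin : {x : Module.End ℤ L | ∃ b ∈ (⊤ : Subgroup Γ), x = ρ (b * c * b⁻¹)}.Finite := by
    have hQ : Finite (B ⧸ B'.subgroupOf B) := by
      have : (B'.subgroupOf B).FiniteIndex := ⟨hfi⟩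
      infer_instance
    refine (Set.finite_iUnion fun q : B ⧸ B'.subgroupOf B =>
      finite_central_multiples ρ hirr (q.out : Γ) (ρ c).charpoly
        (LinearMap.charpoly_monic _)).subset ?_
    rintro _ ⟨b, -, rfl⟩
    have hd : b * c * b⁻¹ ∈ B := hB.conj_mem c hc b
    set d : B := ⟨b * c * b⁻¹, hd⟩ with hdd
    set q : B ⧸ B'.subgroupOf B := QuotientGroup.mk d with hq
    have h1 : q.out⁻¹ * d ∈ B'.subgroupOf B := QuotientGroup.eq.1 (Quotient.out_eq q)
    have h2 : (q.out : Γ)⁻¹ * (b * c * b⁻¹) ∈ B' := h1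
    refine Set.mem_iUnion.2 ⟨q, (q.out : Γ)⁻¹ * (b * c * b⁻¹), hBZ h2, ?_,
      aeval_conj_charpoly ρ c b⟩
    rw [map_mul ρ _ (q.out : Γ), ← (hBZ h2 (q.out : Γ)).eq, ← map_mul, mul_inv_cancel_left]
  obtain ⟨C, -, hCfi, hC⟩ := exists_finiteIndex_commute ρ ⊤ c hfin
  rw [Subgroup.relIndex_top_right] at hCfi
  exact hst C ⟨hCfi⟩ _ hC

/-- An irreducible solvable linear group with stable centralizer is abelian, by descent along the
derived series. -/
lemma commute_of_solvable [Nontrivial L] (ρ : Γ →* Module.End ℤ L) (hirr : IsIrred ρ)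
    (hst : HasStableCentralizer ρ) [Group.IsSolvable Γ] (a b : Γ) : Commute (ρ a) (ρ b) := by
  obtain ⟨n, hn⟩ := Group.IsSolvable.solvable (G := Γ)
  have key : ∀ k ≤ n, derivedSeries Γ (n - k) ≤ imageCenter ρ := by
    intro k
    induction k with
    | zero => intro _; rw [Nat.sub_zero, hn]; exact bot_le
    | succ k ih =>
      intro hk
      refine le_imageCenter_of_commutator ρ hirr hst _ inferInstance ?_
      intro x hx y hy
      apply ih (by omega)
      rw [show n - k = (n - (k + 1)) + 1 by omega, derivedSeries_succ]
      exact Subgroup.commutator_mem_commutator hx hy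
  have := key n le_rfl
  rw [Nat.sub_self, derivedSeries_zero] at this
  exact this (Subgroup.mem_top b) a

end Malcev

/-! ### Groups acting through an order of a number field -/

section CommutativeCase

open NumberField nonZeroDivisors

universe w

lemma exists_embedding_numberField (R : Type w) [CommRing R] [IsDomain R] [Module.Finite ℤ R]
    [CharZero R] : ∃ (K : Type w) (_ : Field K) (_ : NumberField K) (j : R →+* K),
      Function.Injective j := by
  refine ⟨FractionRing R, inferInstance, ?_, algebraMap R (FractionRing R),
    IsFractionRing.injective R _⟩
  let : Algebra ℤ (FractionRing R) := Ring.toIntAlgebra _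
  exact { to_finiteDimensional := Module.Finite.of_isLocalization ℤ R ℤ⁰ }

/-- The congruence subgroup property when the image lies in a pure commutative domain of
endomorphisms. The group then acts through units of a number field, and the theorem of Chevalley is
applied to the exponent `k` of the torsion of the unit group modulo the image of `H`. -/
lemma CongruenceProperty.of_domain {Γ L : Type*} [Group Γ] [AddCommGroup L]
    (ρ : Γ →* Module.End ℤ L) {R : Type*} [CommRing R] [IsDomain R] [Module.Finite ℤ R]
    [CharZero R] (φ : R →+* Module.End ℤ L) (hφ : Function.Injective φ)
    (hρ : ∀ g, ρ g ∈ φ.range)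
    (hpure : ∀ (c : ℤ) (x : Module.End ℤ L), c ≠ 0 → c • x ∈ φ.range → x ∈ φ.range) :
    CongruenceProperty ρ := by
  intro H hH hker
  obtain ⟨K, _, _, j, hj⟩ := exists_embedding_numberField R
  choose ψ₀ hψ₀ using hρ
  let ψ : Γ →* R :=
    { toFun := ψ₀
      map_one' := hφ (by rw [hψ₀, map_one, map_one])
      map_mul' := fun a b => hφ (by rw [hψ₀, map_mul, map_mul, hψ₀, hψ₀]) }
  have hψ : ∀ g, φ (ψ g) = ρ g := hψ₀
  have hint : ∀ r, IsIntegral ℤ (j r) := fun r =>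
    (Algebra.IsIntegral.isIntegral (R := ℤ) r).map j.toIntAlgHom
  let ι : R →+* 𝓞 K :=
    { RingOfIntegers.restrict_monoidHom j.toMonoidHom hint,
      RingOfIntegers.restrict_addMonoidHom j.toAddMonoidHom hint with }
  have hι : Function.Injective ι := fun a b hab =>
    hj (congrArg (algebraMap (𝓞 K) K) hab)
  let χ : Γ →* (𝓞 K)ˣ := (ι.toMonoidHom.comp ψ).toHomUnits
  have hχ : ∀ g, ((χ g : (𝓞 K)ˣ) : 𝓞 K) = ι (ψ g) := fun g => rfl
  let e := H.normalCore.index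
  have he : e ≠ 0 := (Subgroup.finiteIndex_normalCore (H := H)).index_ne_zero
  have hpow : ∀ g : Γ, g ^ e ∈ H := fun g =>
    H.normalCore_le (Subgroup.pow_index_mem H.normalCore g)
  have : Module.Finite ℤ (Additive (𝓞 K)ˣ) := inferInstance
  obtain ⟨k, hk0, hk⟩ := exists_torsion_exponent
    (AddSubgroup.toIntSubmodule (Subgroup.toAddSubgroup (H.map χ)))
  obtain ⟨m, hm0, hm⟩ := chevalley_units (K := K) k hk0
  refine ⟨m, hm0, ?_⟩
  rintro x ⟨f, hf⟩
  obtain ⟨r, rfl⟩ : f ∈ φ.range := by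
    refine hpure m f hm0 ⟨ψ x - 1, ?_⟩
    rw [map_sub, hψ, map_one, hf]; abel
  have hdvd : (m : 𝓞 K) ∣ ((χ x : (𝓞 K)ˣ) : 𝓞 K) - 1 := by
    refine ⟨ι r, ?_⟩
    have : ψ x = 1 + m * r := hφ (by rw [hψ, hf]; simp [zsmul_eq_mul])
    rw [hχ, this]; simp
  obtain ⟨y, hy⟩ := hm _ hdvd
  have hyk : y ^ k ∈ H.map χ := by
    refine hk ((e * k : ℕ) : ℤ) (Additive.ofMul y) (by exact_mod_cast mul_ne_zero he hk0) ?_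
    rw [natCast_zsmul]
    change y ^ (e * k) ∈ H.map χ
    rw [mul_comm, pow_mul, ← hy, ← map_pow]
    exact ⟨_, hpow x, rfl⟩
  rw [← hy] at hyk
  obtain ⟨h, hh, hhx⟩ := hyk
  have h1 : ψ h = ψ x := hι (by rw [← hχ, ← hχ, hhx])
  have h2 : ρ h = ρ x := by rw [← hψ, ← hψ, h1]
  have h5 : h⁻¹ * x ∈ ρ.ker := by
    rw [MonoidHom.mem_ker, map_mul, ← h2, ← map_mul, inv_mul_cancel, map_one]
  simpa using H.mul_mem hh (hker h5)

end CommutativeCase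

/-! ### Soluble-by-finite groups -/

section Main

/-- The strongly irreducible case: a solvable subgroup of finite index acts, after passing to a
suitable subgroup `B'` of finite index, by commuting endomorphisms, and the double centralizer of
its image is a pure commutative domain. -/
lemma CongruenceProperty.of_stronglyIrred {Γ L : Type*} [Group Γ] [AddCommGroup L]
    [Module.Finite ℤ L] [Module.Free ℤ L] [Nontrivial L] (ρ : Γ →* Module.End ℤ L)
    (S : Subgroup Γ) [hS : Group.IsSolvable S] [hSf : S.FiniteIndex]
    (hirr : ∀ C : Subgroup Γ, C.FiniteIndex → IsIrred (ρ.comp C.subtype)) :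
    CongruenceProperty ρ := by
  obtain ⟨B', hB'S, hB'fi, hmax⟩ := exists_maximal_centralizer ρ S
  have hB'f : B'.FiniteIndex := ⟨by
    rw [← Subgroup.relIndex_mul_index hB'S]
    exact mul_ne_zero hB'fi hSf.index_ne_zero⟩
  have hB'sol : Group.IsSolvable B' :=
    Group.isSolvable_of_isSolvable_injective (Subgroup.inclusion_injective hB'S)
  have hst : HasStableCentralizer (ρ.comp B'.subtype) := by
    intro C hC x hx g
    have hCf : (C.map B'.subtype).FiniteIndex := ⟨by
      rw [Subgroup.index_map_subtype]
      exact mul_ne_zero hC.index_ne_zero hB'f.index_ne_zero⟩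
    refine hmax (C.map B'.subtype) (Subgroup.map_subtype_le C) ?_ x ?_ g g.2
    · exact (inferInstance : ((C.map B'.subtype).subgroupOf S).FiniteIndex).index_ne_zero
    · rintro _ ⟨c, hc, rfl⟩
      exact hx c hc
  have hcomm := commute_of_solvable (ρ.comp B'.subtype) (hirr B' hB'f) hst
  obtain ⟨R, _, _, φ, hφ, hR⟩ := exists_doubleCentralizer (Set.range (ρ.comp B'.subtype)) (by
    rintro _ ⟨a, rfl⟩ _ ⟨b, rfl⟩
    exact hcomm a b)
  have hRc : ∀ r : R, ∀ b : B', Commute (ρ.comp B'.subtype b) (φ r) := by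
    intro r b
    refine ((hR (φ r)).1 ⟨r, rfl⟩ _ ?_).symm
    rintro _ ⟨a, rfl⟩
    exact hcomm a b
  have : Nontrivial R := ⟨0, 1, fun h => by
    have h1 := congrArg φ h
    rw [map_zero, map_one] at h1
    exact zero_ne_one h1⟩
  have : NoZeroDivisors R := ⟨fun {a b} hab => by
    by_cases ha : a = 0
    · exact Or.inl ha
    · right
      apply hφ
      rw [map_zero]
      refine (hirr B' hB'f).eq_zero_of_mul (φ a) (φ b) ?_ (hRc a) ?_
      · rwa [Ne, map_eq_zero_iff φ hφ]
      · rw [← map_mul, hab, map_zero]⟩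
  have : IsDomain R := NoZeroDivisors.to_isDomain R
  have : CharZero R := ⟨fun a b hab => by
    obtain ⟨x, hx⟩ := exists_ne (0 : L)
    have h1 := LinearMap.congr_fun (congrArg φ hab) x
    rw [map_natCast, map_natCast, Module.End.natCast_apply, Module.End.natCast_apply,
      ← natCast_zsmul, ← natCast_zsmul] at h1
    exact_mod_cast smul_left_injective ℤ hx h1⟩
  have hpure : ∀ (c : ℤ) (x : Module.End ℤ L), c ≠ 0 → c • x ∈ φ.range → x ∈ φ.range := by
    intro c x hc hx
    rw [hR] at hx ⊢
    intro y hy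
    have h1 := hx y hy
    have h2 : c • (x * y) = c • (y * x) := by
      rw [← smul_mul_assoc, h1.eq, mul_smul_comm]
    exact smul_right_injective _ hc h2
  have hinv : ∀ g, ρ g ∈ φ.range → ρ g⁻¹ ∈ φ.range := by
    intro g hg
    rw [hR] at hg ⊢
    intro y hy
    have h1 := (hg y hy).eq
    have h3 : ρ g * ρ g⁻¹ = 1 := by rw [← map_mul, mul_inv_cancel, map_one]
    have h4 : ρ g⁻¹ * ρ g = 1 := by rw [← map_mul, inv_mul_cancel, map_one]
    calc ρ g⁻¹ * y = ρ g⁻¹ * (y * ρ g) * ρ g⁻¹ := by rw [mul_assoc, mul_assoc, h3, mul_one]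
      _ = y * ρ g⁻¹ := by rw [← h1, ← mul_assoc, h4, one_mul]
  let Γ₀ : Subgroup Γ :=
    { carrier := {g | ρ g ∈ φ.range}
      one_mem' := by
        change ρ 1 ∈ φ.range
        rw [map_one]; exact one_mem _
      mul_mem' := by
        intro a b ha hb
        change ρ (a * b) ∈ φ.range
        rw [map_mul]; exact mul_mem ha hb
      inv_mem' := fun {g} hg => hinv g hg }
  have hle : B' ≤ Γ₀ := by
    intro b hb
    refine (hR _).2 ?_
    intro y hy
    exact hy _ ⟨⟨b, hb⟩, rfl⟩
  have hΓ₀f : Γ₀.FiniteIndex := Subgroup.finiteIndex_of_le hle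
  obtain ⟨m₀, hm₀, hm⟩ := exists_levelSubgroup_le_of_pure ρ
    (AddSubgroup.toIntSubmodule φ.range.toAddSubgroup) hpure Γ₀ (fun g => Iff.rfl) hΓ₀f
  exact .of_subgroup ρ Γ₀ m₀ hm₀ hm (.of_domain _ φ hφ (fun g => g.2) hpure)

/-- Stability of `W` under `g` passes to `g⁻¹` as soon as some power of `g⁻¹` stabilizes `W`. -/
lemma map_inv_mem_of_map_pow_inv_mem {Γ L : Type*} [Group Γ] [AddCommGroup L] (ρ : Γ →* Module.End ℤ L) (W : Submodule ℤ L) (g : Γ)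
    (hg : ∀ x ∈ W, ρ g x ∈ W) (e : ℕ) (he : e ≠ 0) (hge : ∀ x ∈ W, ρ (g ^ e)⁻¹ x ∈ W) :
    ∀ x ∈ W, ρ g⁻¹ x ∈ W := by
  have hpow : ∀ k : ℕ, ∀ x ∈ W, ρ (g ^ k) x ∈ W := by
    intro k
    induction k with
    | zero => intro x hx; simpa using hx
    | succ k ih =>
      intro x hx
      rw [pow_succ', map_mul]
      exact hg _ (ih x hx)
  intro x hx
  obtain ⟨k, rfl⟩ := Nat.exists_eq_succ_of_ne_zero he
  have h1 : g⁻¹ = g ^ k * (g ^ (k + 1))⁻¹ := by rw [pow_succ']; group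
  rw [h1, map_mul]
  exact hpow k _ (hge x hx)

lemma exists_solvable_subgroupOf {Γ : Type*} [Group Γ]
    (hΓ : ∃ S : Subgroup Γ, Group.IsSolvable S ∧ S.FiniteIndex)
    (Δ : Subgroup Γ) : ∃ S : Subgroup Δ, Group.IsSolvable S ∧ S.FiniteIndex := by
  obtain ⟨S, hS, hSf⟩ := hΓ
  refine ⟨S.subgroupOf Δ, ?_, inferInstance⟩
  let f : S.subgroupOf Δ →* S :=
    { toFun := fun x => ⟨x.1.1, x.2⟩, map_one' := rfl, map_mul' := fun _ _ => rfl }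
  refine Group.isSolvable_of_isSolvable_injective (f := f) ?_
  intro a b hab
  exact Subtype.ext (Subtype.ext (congrArg (fun s : S => (s : Γ)) hab))


universe u₁ u₂

/-- Every soluble-by-finite group acting on a lattice has the congruence subgroup property. The
induction is on the rank of the lattice. -/
theorem congruenceProperty_of_solubleByFinite (r : ℕ) :
    ∀ {Γ : Type u₁} {L : Type u₂} [Group Γ] [AddCommGroup L] [Module.Finite ℤ L]
      [Module.Free ℤ L] (ρ : Γ →* Module.End ℤ L),
      (∃ S : Subgroup Γ, Group.IsSolvable S ∧ S.FiniteIndex) → Module.finrank ℤ L = r →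
      CongruenceProperty ρ := by
  induction r using Nat.strong_induction_on with | _ r ih => ?_
  intro Γ L _ _ _ _ ρ hΓ hr
  rcases subsingleton_or_nontrivial L with hL | hL
  · intro H _ hker
    refine ⟨1, one_ne_zero, fun x _ => hker ?_⟩
    rw [MonoidHom.mem_ker]
    exact Subsingleton.elim _ _
  by_cases hirr : ∀ C : Subgroup Γ, C.FiniteIndex → IsIrred (ρ.comp C.subtype)
  · obtain ⟨S, hS, hSf⟩ := hΓ
    exact .of_stronglyIrred ρ S hirr
  unfold IsIrred at hirr
  push Not at hirr
  obtain ⟨C, hC, W, hWp, hWC, hW0, hW1⟩ := hirr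
  let e := C.normalCore.index
  have he : e ≠ 0 := (Subgroup.finiteIndex_normalCore (H := C)).index_ne_zero
  have hpow : ∀ g : Γ, g ^ e ∈ C := fun g =>
    C.normalCore_le (Subgroup.pow_index_mem C.normalCore g)
  let Γ₀ : Subgroup Γ :=
    { carrier := {g | ∀ x ∈ W, ρ g x ∈ W}
      one_mem' := fun x hx => by simpa using hx
      mul_mem' := fun {a b} ha hb x hx => by
        rw [map_mul]
        exact ha _ (hb x hx)
      inv_mem' := fun {g} hg => map_inv_mem_of_map_pow_inv_mem ρ W g hg e he
        (hWC ⟨_, C.inv_mem (hpow g)⟩) }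
  have hle : C ≤ Γ₀ := fun c hc => hWC ⟨c, hc⟩
  have hΓ₀f : Γ₀.FiniteIndex := Subgroup.finiteIndex_of_le hle
  let P : Submodule ℤ (Module.End ℤ L) :=
    { carrier := {f | ∀ x ∈ W, f x ∈ W}
      zero_mem' := fun x _ => W.zero_mem
      add_mem' := fun ha hb x hx => W.add_mem (ha x hx) (hb x hx)
      smul_mem' := fun c f hf x hx => W.smul_mem c (hf x hx) }
  have hP : IsPure P := fun c f hc hf x hx => hWp c _ hc (hf x hx)
  obtain ⟨m₀, hm₀, hm⟩ := exists_levelSubgroup_le_of_pure ρ P hP Γ₀ (fun g => Iff.rfl) hΓ₀f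
  refine .of_subgroup ρ Γ₀ m₀ hm₀ hm ?_
  have hfree := hWp.free_quotient
  have hrank := W.finrank_quotient_add_finrank
  have hΓ₀s := exists_solvable_subgroupOf hΓ Γ₀
  have hWn : Nontrivial W := Submodule.nontrivial_iff_ne_bot.2 hW0
  have hQn : Nontrivial (L ⧸ W) := Submodule.Quotient.nontrivial_iff.2 hW1
  have hpos1 : 0 < Module.finrank ℤ W := Module.finrank_pos
  have hpos2 : 0 < Module.finrank ℤ (L ⧸ W) := Module.finrank_pos
  refine .of_invariant (ρ.comp Γ₀.subtype) W (fun g => g.2) hWp ?_ ?_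
  · exact ih _ (by omega) _ hΓ₀s rfl
  · exact ih _ (by omega) _ (exists_solvable_subgroupOf hΓ₀s _) rfl

end Main

/-- Every finite-index subgroup of a soluble-by-finite subgroup `G` of `GL_n(ℤ)` contains
`G ∩ K_m` for some nonzero `m`, where `K_m` is the principal congruence subgroup of
level `m`. -/
theorem finiteIndex_subgroup_contains_congruence
    (n : ℕ) (G : Subgroup (Matrix.GeneralLinearGroup (Fin n) ℤ))
    (hsbf : ∃ S : Subgroup ↥G, IsSolvable ↥S ∧ S.FiniteIndex)
    (H : Subgroup ↥G) (hH : H.FiniteIndex) :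
    ∃ m : ℤ, m ≠ 0 ∧ (congruenceSubgroup n m).subgroupOf G ≤ H := by
  let ρ : ↥G →* Module.End ℤ (Fin n → ℤ) :=
    ((Matrix.toLinAlgEquiv' : Matrix (Fin n) (Fin n) ℤ ≃ₐ[ℤ] _) :
      Matrix (Fin n) (Fin n) ℤ →* Module.End ℤ (Fin n → ℤ)).comp
      ((Units.coeHom _).comp G.subtype)
  have hρ : ∀ g : ↥G, ρ g = Matrix.toLinAlgEquiv' ((g : Matrix.GeneralLinearGroup (Fin n) ℤ) :
    Matrix (Fin n) (Fin n) ℤ) := fun g => rfl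
  have hker : ρ.ker ≤ H := by
    intro g hg
    rw [MonoidHom.mem_ker, hρ, ← map_one Matrix.toLinAlgEquiv'] at hg
    have h1 : g = 1 := Subtype.ext (Units.ext (Matrix.toLinAlgEquiv'.injective hg))
    rw [h1]
    exact H.one_mem
  obtain ⟨m, hm0, hm⟩ := congruenceProperty_of_solubleByFinite _ ρ hsbf rfl H hH hker
  refine ⟨m, hm0, fun g hg => hm ?_⟩
  have hdvd : ∀ i j, m ∣ (((g : Matrix.GeneralLinearGroup (Fin n) ℤ) :
    Matrix (Fin n) (Fin n) ℤ) - 1) i j := hg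
  choose f hf using hdvd
  refine ⟨Matrix.toLinAlgEquiv' (Matrix.of f), ?_⟩
  rw [hρ, ← map_one Matrix.toLinAlgEquiv', ← map_zsmul, ← map_add]
  congr 1
  ext i j
  have h1 := hf i j
  rw [Matrix.sub_apply, sub_eq_iff_eq_add'] at h1
  rw [h1, Matrix.add_apply, Matrix.smul_apply, Matrix.of_apply, smul_eq_mul]
end

section
/- Let G be a finitely generated nilpotent group and φ : G → G an endomorphism that induces the identity on the abelianization, i.e., φ(g)G' = gG' for all g ∈ G, where G' = [G,G]. Then φ is an automorphism of G. -/
/-!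
Write `γ₀ = G ≥ γ₁ = G' ≥ γ₂ ≥ …` for the lower central series. The key point is that an
IA-endomorphism `φ` acts trivially on every factor `γₙ / γₙ₊₁` (`IAEnd.map_mul_inv_mem`). This is
proved by induction on `n`: for `a ∈ γₙ` and `b ∈ G` write `φ a = c a` and `φ b = d b` with
`c ∈ γₙ₊₁`, `d ∈ γ₁`. Modulo `γₙ₊₂` the elements `c` and `⁅a, b⁆` are central and `a` commutes with
`d`, because `⁅γ₁, γₙ⁆ ≤ γₙ₊₂` by the three subgroups lemma; hence `φ ⁅a, b⁆ = ⁅c a, d b⁆` is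
congruent to `⁅a, b⁆`.

Since some `γₘ` is trivial, injectivity follows because an element of the kernel lies in every `γₙ`,
and surjectivity because `γₙ ≤ φ(G)` for all `n`, by descending induction from `n = m`: if `g ∈ γₙ`
then `φ(g) g⁻¹ ∈ γₙ₊₁ ≤ φ(G)`.
-/

namespace IAEnd

open Subgroup
open scoped commutatorElement

variable {G : Type*} [Group G]

/-- The case `⁅γ₁, γₙ⁆ ≤ γₙ₊₂` of the general inclusion for the lower central series. -/
lemma commutator_lowerCentralSeries_le (n : ℕ) :
    ⁅commutator G, (⊤ : Subgroup G).lowerCentralSeries n⁆ ≤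
      (⊤ : Subgroup G).lowerCentralSeries (n + 2) := by
  -- The three subgroups lemma is applied to the images in the quotient by `γₙ₊₂`.
  set N := (⊤ : Subgroup G).lowerCentralSeries (n + 2)
  have hbot : ∀ H : Subgroup G, H.map (QuotientGroup.mk' N) = ⊥ ↔ H ≤ N := by
    intro H
    rw [Subgroup.map_eq_bot_iff, QuotientGroup.ker_mk']
  rw [← hbot, _root_.commutator_def, map_commutator, map_commutator]
  apply commutator_commutator_eq_bot_of_rotate
  · rw [← map_commutator, ← map_commutator, hbot, commutator_comm ⊤]
    exact le_rfl
  · rw [← map_commutator, ← map_commutator, hbot]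
    exact le_rfl

/-- If `c` and `⁅a, b⁆` are central and `a` commutes with `d`, then `c` and `d` may be cancelled
from `⁅c * a, d * b⁆`. -/
lemma commutatorElement_mul_mul {a b c d : G} (hc : ∀ x, Commute c x) (had : Commute a d)
    (hab : ∀ x, Commute ⁅a, b⁆ x) : ⁅c * a, d * b⁆ = ⁅a, b⁆ := by
  have h1 : ⁅c * a, d * b⁆ = ⁅a, d * b⁆ := by
    have := (hc (a * (d * b) * a⁻¹)).eq
    rw [commutatorElement_def, commutatorElement_def, mul_inv_rev]
    calc c * a * (d * b) * (a⁻¹ * c⁻¹) * (d * b)⁻¹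
        = (c * (a * (d * b) * a⁻¹)) * c⁻¹ * (d * b)⁻¹ := by group
      _ = _ := by rw [this]; group
  have h2 : ⁅a, d * b⁆ = d * ⁅a, b⁆ * d⁻¹ := by
    rw [commutatorElement_def, commutatorElement_def, ← mul_assoc a, had.eq]
    group
  rw [h1, h2, ← (hab d).eq, mul_inv_cancel_right]

/-- An IA-endomorphism acts trivially on each factor `γₙ / γₙ₊₁`. -/
lemma map_mul_inv_mem (φ : G →* G) (h : ∀ g : G, φ g * g⁻¹ ∈ commutator G) (n : ℕ) :
    ∀ g ∈ (⊤ : Subgroup G).lowerCentralSeries n,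
      φ g * g⁻¹ ∈ (⊤ : Subgroup G).lowerCentralSeries (n + 1) := by
  induction n with
  | zero => intro g _; exact h g
  | succ n ih =>
    set N := (⊤ : Subgroup G).lowerCentralSeries (n + 2)
    let π := QuotientGroup.mk' N
    have hπ : ∀ x y : G, ⁅x, y⁆ ∈ N → Commute (π x) (π y) := by
      intro x y hxy
      rw [← commutatorElement_eq_one_iff_commute, ← map_commutatorElement]
      exact (QuotientGroup.eq_one_iff _).2 hxy
    have hcentral : ∀ x ∈ (⊤ : Subgroup G).lowerCentralSeries (n + 1), ∀ q, Commute (π x) q := by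
      intro x hx q
      obtain ⟨y, rfl⟩ := QuotientGroup.mk'_surjective N q
      exact hπ x y (commutator_mem_commutator hx (mem_top y))
    -- It suffices to compare `π ∘ φ` and `π` on the commutators generating `γₙ₊₁`.
    have hle : (⊤ : Subgroup G).lowerCentralSeries (n + 1) ≤ (π.comp φ).eqLocus π := by
      rw [Subgroup.lowerCentralSeries_succ, commutator_le]
      intro a ha b hb
      change π (φ ⁅a, b⁆) = π ⁅a, b⁆
      have hA : φ a = φ a * a⁻¹ * a := by group
      have hB : φ b = φ b * b⁻¹ * b := by group
      rw [map_commutatorElement, hA, hB, map_commutatorElement, map_commutatorElement,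
        map_mul π (φ a * a⁻¹), map_mul π (φ b * b⁻¹)]
      refine commutatorElement_mul_mul (hcentral _ (ih a ha)) (hπ _ _ ?_) ?_
      · apply commutator_lowerCentralSeries_le n
        rw [commutator_comm]
        exact commutator_mem_commutator ha (h b)
      · rw [← map_commutatorElement]
        exact hcentral _ (commutator_mem_commutator ha hb)
    intro g hg
    have hg' : π (φ g) = π g := hle hg
    apply (QuotientGroup.eq_one_iff _).1
    change π (φ g * g⁻¹) = 1
    rw [map_mul, hg', map_inv, mul_inv_cancel]

end IAEnd

/-- An IA-endomorphism of a finitely generated nilpotent group (an endomorphism inducing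
the identity on the abelianization) is an automorphism. -/
theorem ia_endomorphism_is_automorphism
    (G : Type*) [Group G] [Group.IsNilpotent G] (hfg : Group.FG G)
    (φ : G →* G) (h : ∀ g : G, φ g * g⁻¹ ∈ commutator G) :
    Function.Bijective φ := by
  obtain ⟨m, hm⟩ := (Subgroup.nilpotent_iff_lowerCentralSeries (G := G)).1 inferInstance
  have key := IAEnd.map_mul_inv_mem φ h
  constructor
  · rw [injective_iff_map_eq_one]
    intro g hg
    have hmem : ∀ n, g ∈ (⊤ : Subgroup G).lowerCentralSeries n := by
      intro n
      induction n with
      | zero => exact Subgroup.mem_top g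
      | succ n ih => simpa [hg] using key n g ih
    simpa [hm] using hmem m
  · have hle : (⊤ : Subgroup G).lowerCentralSeries 0 ≤ φ.range := by
      refine Nat.decreasingInduction (motive := fun n _ ↦
        (⊤ : Subgroup G).lowerCentralSeries n ≤ φ.range) ?_ ?_ (Nat.zero_le m)
      · intro n _ ih g hg
        have := φ.range.mul_mem (φ.range.inv_mem (ih (key n g hg))) ⟨g, rfl⟩
        simpa using this
      · rw [hm]
        exact bot_le
    exact fun g ↦ hle (Subgroup.mem_top g)
end
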